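/- arXiv:0911.0258 — 3 statements merged into one kernel-verified Lean document; each statement's English description precedes it below -/
import Mathlib

section
/- Let Q be a positive constant such that Q² ≥ sup σ + 7|P|² + 3A + 9|J|, and for μ > 0 set u⁺_μ = √(1 + M/r + μ²/(4r²)) − 1 − μ/(2r) with M = √(Q² + μ²), and Φ⁺_μ = 1 + μ/(2r) + u⁺_μ. Then u⁺_μ is a supersolution: Δu⁺_μ ≤ −K²/(8(Φ⁺_μ)⁷) − 2πρ/(Φ⁺_μ)³ at every point of ℝ³∖{0}. -/
open MeasureTheory Real Filter Metric Set
open scoped ENNReal RealInnerProductSpace NNReal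

noncomputable section

abbrev E3 : Type := EuclideanSpace ℝ (Fin 3)

/-- The flat Laplacian on `ℝ³`. -/
def lap (u : E3 → ℝ) (x : E3) : ℝ :=
  ∑ i : Fin 3, iteratedFDeriv ℝ 2 u x ![EuclideanSpace.single i 1, EuclideanSpace.single i 1]

/-- The weighted norm `‖f‖_{L'²_δ}` (with values in `ℝ≥0∞`). -/
def wL2norm (δ : ℝ) (f : E3 → ℝ) : ℝ≥0∞ :=
  (∫⁻ x in {x : E3 | x ≠ 0}, (‖f x‖₊ : ℝ≥0∞) ^ (2:ℝ) * (‖x‖₊ : ℝ≥0∞) ^ (-2*δ - 3)) ^ (1/2 : ℝ)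

/-- The weighted Sobolev norm `‖f‖_{H'^k_δ} = Σ_{j=0}^k ‖D^j f‖_{L'²_{δ-j}}`. -/
def wHnorm (k : ℕ) (δ : ℝ) (f : E3 → ℝ) : ℝ≥0∞ :=
  ∑ j ∈ Finset.range (k+1), wL2norm (δ - j) (fun x => ‖iteratedFDeriv ℝ j f x‖)

/-- Test functions: `C^∞` functions with compact support contained in `ℝ³ ∖ {0}`. -/
def IsTestFun (g : E3 → ℝ) : Prop :=
  ContDiff ℝ (⊤ : ℕ∞) g ∧ HasCompactSupport g ∧ tsupport g ⊆ {x : E3 | x ≠ 0}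

/-- Membership in `H'^k_δ`, the completion of `C^∞_c(ℝ³∖{0})` in the norm `wHnorm k δ`. -/
def MemH (k : ℕ) (δ : ℝ) (f : E3 → ℝ) : Prop :=
  wHnorm k δ f < ⊤ ∧
    ∀ ε : ℝ≥0∞, 0 < ε → ∃ g : E3 → ℝ, IsTestFun g ∧ wHnorm k δ (f - g) ≤ ε

/-- Membership in `L'²_δ`. -/
def MemL2 (δ : ℝ) (f : E3 → ℝ) : Prop :=
  AEMeasurable f ∧ wL2norm δ f < ⊤

/-- The square `K²` of the extrinsic curvature tensor `K = K_P + K_J + K_A`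
(with `Jᵃ = (0,0,J)`). -/
def Ksq (A J : ℝ) (P : E3) (x : E3) : ℝ :=
  6 * (A^2 + 3 * J^2 * ((x 0)^2 + (x 1)^2) / ‖x‖^2) / ‖x‖^6
  + (12 * A * ⟪P, ‖x‖⁻¹ • x⟫
      + 18 * J * ((‖x‖⁻¹ * x 0) * P 1 - (‖x‖⁻¹ * x 1) * P 0)) / ‖x‖^5
  + 9 * (‖P‖^2 + 2 * ⟪P, ‖x‖⁻¹ • x⟫^2) / (2 * ‖x‖^4)

/-- The nonlinearity `F(x,Φ) = -K²/(8Φ⁷) - 2πρ/Φ³`, with `ρ = σ/(8π r⁴)`. -/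
def Fnl (A J : ℝ) (P : E3) (σ : E3 → ℝ) (x : E3) (Φ : ℝ) : ℝ :=
  - Ksq A J P x / (8 * Φ^7) - σ x / (4 * ‖x‖^4 * Φ^3)

/-- `u` is the (nonnegative, `C¹`, decaying) solution `u_μ` of `Δu = F(x, 1 + μ/2r + u)`. -/
def IsSolμ (A J : ℝ) (P : E3) (σ : E3 → ℝ) (μ : ℝ) (u : E3 → ℝ) : Prop :=
  (∀ x, 0 ≤ u x) ∧ ContDiff ℝ 1 u ∧
    Tendsto u (cocompact E3) (nhds 0) ∧
    ∀ x : E3, x ≠ 0 → lap u x = Fnl A J P σ x (1 + μ / (2*‖x‖) + u x)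

/-- The extreme (μ = 0) equation `Δu = -K²/(8(1+u)⁷) - 2πρ/(1+u)³` on `ℝ³∖{0}`. -/
def IsExtremeSol (A J : ℝ) (P : E3) (σ : E3 → ℝ) (u : E3 → ℝ) : Prop :=
  ∀ x : E3, x ≠ 0 →
    lap u x = - Ksq A J P x / (8 * (1 + u x)^7) - σ x / (4 * ‖x‖^4 * (1 + u x)^3)

/-- The Laplace–Beltrami operator on the unit sphere: Euclidean Laplacian of the
degree-zero homogeneous extension. -/
def sphLap (V : E3 → ℝ) (p : E3) : ℝ := lap (fun y => V (‖y‖⁻¹ • y)) p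

/-- A function is `C^∞` on the sphere `S²` iff its homogeneous extension is smooth away
from the origin. -/
def SmoothOnSphere (V : E3 → ℝ) : Prop :=
  ContDiffOn ℝ (⊤ : ℕ∞) (fun y : E3 => V (‖y‖⁻¹ • y)) {x : E3 | x ≠ 0}

/-- `sin²θ` for a point on the unit sphere (polar axis = third coordinate axis). -/
def sin2θ (p : E3) : ℝ := (p 0)^2 + (p 1)^2


/-- The upper bound `u⁺_μ = √(1 + M/r + μ²/(4r²)) - 1 - μ/(2r)`, `M = √(Q² + μ²)`. -/
def uplus (Q μ : ℝ) (x : E3) : ℝ :=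
  Real.sqrt (1 + Real.sqrt (Q^2 + μ^2) / ‖x‖ + μ^2 / (4*‖x‖^2)) - 1 - μ / (2*‖x‖)

/-!
In the inverse radius `t = 1/r` the Laplacian of a radial function `F(1/r)` on `ℝ³` is `F''(t) t⁴`,
and `Φ⁺_μ = √q(t)` with the quadratic `q(t) = (μ²/4) t² + M t + 1`, whose discriminant is
`M² - μ² = Q²`. Since `(√q)'' = -disc(q) / (4 q^{3/2})` and the remaining terms of `u⁺_μ` are affine
in `t`, this gives `Δu⁺_μ = -Q² / (4 r⁴ (Φ⁺_μ)³)` exactly.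

It remains to absorb the two source terms into `Q²`. Bounding every angular factor by its maximum
makes `r⁴ K²` at most a quadratic polynomial in `t`, which is dominated term by term by
`2 (7|P|² + 3|A| + 9|J|) (1 + |Q| t)²`, and `1 + |Q| t ≤ (Φ⁺_μ)²` because `|Q| ≤ M`.
-/

section RadialLaplacian

open scoped Laplacian

variable {E : Type*} [NormedAddCommGroup E] [InnerProductSpace ℝ E]

lemma hasFDerivAt_comp_norm {h : ℝ → ℝ} {h' : ℝ} {x : E} (hx : x ≠ 0)
    (hh : HasDerivAt h h' ‖x‖) :
    HasFDerivAt (fun y : E => h ‖y‖) ((h' / ‖x‖) • innerSL ℝ x) x := by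
  have hnorm : HasFDerivAt (fun y : E => ‖y‖) (‖x‖⁻¹ • innerSL ℝ x) x := by
    have hsqrt := (hasStrictFDerivAt_norm_sq x).hasFDerivAt.sqrt (by simpa using hx)
    simp only [Real.sqrt_sq (norm_nonneg _)] at hsqrt
    exact hsqrt.congr_fderiv (by module)
  exact (hh.comp_hasFDerivAt x hnorm).congr_fderiv (by rw [smul_smul, div_eq_mul_inv])

variable [FiniteDimensional ℝ E]

theorem laplacian_comp_norm {h h' : ℝ → ℝ} {h'' : ℝ} {x : E} (hx : x ≠ 0)
    (hh : ∀ᶠ r in nhds ‖x‖, HasDerivAt h (h' r) r) (hh' : HasDerivAt h' h'' ‖x‖) :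
    Δ (fun y : E => h ‖y‖) x = h'' + (Module.finrank ℝ E - 1) * h' ‖x‖ / ‖x‖ := by
  have hr : ‖x‖ ≠ 0 := norm_ne_zero_iff.2 hx
  have hfderiv : fderiv ℝ (fun y : E => h ‖y‖) =ᶠ[nhds x]
      fun y => (h' ‖y‖ / ‖y‖) • innerSL ℝ y := by
    filter_upwards [continuous_norm.continuousAt.eventually hh, isOpen_ne.mem_nhds hx]
      with y hy hy0 using (hasFDerivAt_comp_norm hy0 hy).fderiv
  have hquot := hasFDerivAt_comp_norm hx (hh'.fun_div (hasDerivAt_id' ‖x‖) hr)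
  have hfderiv₂ := (hquot.smul (innerSL ℝ (E := E)).hasFDerivAt).congr_of_eventuallyEq hfderiv
  let b := stdOrthonormalBasis ℝ E
  have hdiag (i) : iteratedFDeriv ℝ 2 (fun y : E => h ‖y‖) x ![b i, b i] =
      h' ‖x‖ / ‖x‖ + (h'' * ‖x‖ - h' ‖x‖) / ‖x‖ ^ 3 * ⟪x, b i⟫ ^ 2 := by
    rw [iteratedFDeriv_two_apply, hfderiv₂.fderiv]
    change h' ‖x‖ / ‖x‖ * ⟪b i, b i⟫
      + (h'' * ‖x‖ - h' ‖x‖ * 1) / ‖x‖ ^ 2 / ‖x‖ * ⟪x, b i⟫ * ⟪x, b i⟫ = _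
    rw [b.inner_eq_one]
    field_simp
  rw [InnerProductSpace.laplacian_eq_iteratedFDeriv_orthonormalBasis _ b]
  simp only [hdiag, Finset.sum_add_distrib, Finset.sum_const, Finset.card_univ, Fintype.card_fin,
    nsmul_eq_mul, ← Finset.mul_sum, b.sum_sq_inner_left]
  field_simp
  ring

theorem laplacian_comp_inv_norm (hE : Module.finrank ℝ E = 3) {F F' : ℝ → ℝ} {F'' : ℝ} {x : E}
    (hx : x ≠ 0) (hF : ∀ᶠ t in nhds ‖x‖⁻¹, HasDerivAt F (F' t) t)
    (hF' : HasDerivAt F' F'' ‖x‖⁻¹) :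
    Δ (fun y : E => F ‖y‖⁻¹) x = F'' / ‖x‖ ^ 4 := by
  have hr : ‖x‖ ≠ 0 := norm_ne_zero_iff.2 hx
  have hderiv : ∀ᶠ r in nhds ‖x‖,
      HasDerivAt (fun r => F r⁻¹) (F' r⁻¹ * -(r ^ 2)⁻¹) r := by
    filter_upwards [(continuousAt_inv₀ hr).eventually hF, eventually_ne_nhds hr] with r hFr hr0
      using hFr.comp r (hasDerivAt_inv hr0)
  have hderiv₂ := (hF'.comp ‖x‖ (hasDerivAt_inv hr)).mul
    (((hasDerivAt_pow 2 ‖x‖).inv (pow_ne_zero 2 hr)).neg)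
  rw [laplacian_comp_norm hx hderiv hderiv₂, hE]
  simp only [Pi.neg_apply, Pi.inv_apply, Function.comp_apply, Nat.cast_ofNat,
    Nat.add_one_sub_one, pow_one]
  field_simp
  ring

lemma lap_eq_laplacian (u : E3 → ℝ) : lap u = Δ u := by
  rw [InnerProductSpace.laplacian_eq_iteratedFDeriv_orthonormalBasis u
    (EuclideanSpace.basisFun (Fin 3) ℝ)]
  simp only [EuclideanSpace.basisFun_apply]
  rfl

end RadialLaplacian

section SqrtQuadratic

variable {a b c t : ℝ}

lemma hasDerivAt_sqrt_quadratic (ht : 0 < a * t ^ 2 + b * t + c) :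
    HasDerivAt (fun s => √(a * s ^ 2 + b * s + c))
      ((2 * a * t + b) / (2 * √(a * t ^ 2 + b * t + c))) t := by
  have hq : HasDerivAt (fun s => a * s ^ 2 + b * s + c) (2 * a * t + b) t := by
    refine ((((hasDerivAt_pow 2 t).const_mul a).fun_add
      ((hasDerivAt_id' t).const_mul b)).add_const c).congr_deriv ?_
    simp only [Nat.cast_ofNat, Nat.add_one_sub_one, pow_one, mul_one]
    ring
  exact hq.sqrt ht.ne'

lemma hasDerivAt_deriv_sqrt_quadratic (ht : 0 < a * t ^ 2 + b * t + c) :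
    HasDerivAt (fun s => (2 * a * s + b) / (2 * √(a * s ^ 2 + b * s + c)))
      (-discrim a b c / (4 * √(a * t ^ 2 + b * t + c) ^ 3)) t := by
  have hsqrt := Real.sqrt_pos.2 ht
  have hsq := Real.sq_sqrt ht.le
  have hlin : HasDerivAt (fun s => 2 * a * s + b) (2 * a) t := by
    simpa using ((hasDerivAt_id t).const_mul (2 * a)).add_const b
  refine (hlin.fun_div ((hasDerivAt_sqrt_quadratic ht).const_mul 2)
    (by positivity)).congr_deriv ?_
  rw [discrim]
  generalize √(a * t ^ 2 + b * t + c) = S at hsqrt hsq ⊢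
  field_simp
  linear_combination 16 * a * hsq

end SqrtQuadratic

section ConformalFactor

/-- The conformal factor `Φ⁺_μ = 1 + μ/(2r) + u⁺_μ = √(1 + M/r + μ²/(4r²))`, `M = √(Q² + μ²)`,
of the upper bound `u⁺_μ`. -/
def phiPlus (Q μ : ℝ) (x : E3) : ℝ :=
  √(1 + √(Q ^ 2 + μ ^ 2) / ‖x‖ + μ ^ 2 / (4 * ‖x‖ ^ 2))

variable (Q μ : ℝ) (x : E3)

lemma add_uplus_eq_phiPlus : 1 + μ / (2 * ‖x‖) + uplus Q μ x = phiPlus Q μ x := by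
  unfold uplus phiPlus
  ring

lemma phiPlus_pos : 0 < phiPlus Q μ x :=
  Real.sqrt_pos.2 (by positivity)

lemma one_add_abs_div_le_phiPlus_sq : 1 + |Q| / ‖x‖ ≤ phiPlus Q μ x ^ 2 := by
  have hQM : |Q| ≤ √(Q ^ 2 + μ ^ 2) := Real.abs_le_sqrt (by linarith [sq_nonneg μ])
  rw [phiPlus, Real.sq_sqrt (by positivity)]
  calc 1 + |Q| / ‖x‖ ≤ 1 + √(Q ^ 2 + μ ^ 2) / ‖x‖ := by gcongr
    _ ≤ _ := le_add_of_nonneg_right (by positivity)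

variable {x}

theorem lap_uplus (hx : x ≠ 0) :
    lap (uplus Q μ) x = -Q ^ 2 / (4 * ‖x‖ ^ 4 * phiPlus Q μ x ^ 3) := by
  set M := √(Q ^ 2 + μ ^ 2) with hM
  have : 0 ≤ M := Real.sqrt_nonneg _
  have hradicand (y : E3) :
      1 + M / ‖y‖ + μ ^ 2 / (4 * ‖y‖ ^ 2) = μ ^ 2 / 4 * ‖y‖⁻¹ ^ 2 + M * ‖y‖⁻¹ + 1 := by
    simp only [div_eq_mul_inv, mul_inv, inv_pow]
    ring
  have huplus : uplus Q μ =
      fun y => √(μ ^ 2 / 4 * ‖y‖⁻¹ ^ 2 + M * ‖y‖⁻¹ + 1) - 1 - μ / 2 * ‖y‖⁻¹ := by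
    funext y
    rw [uplus, ← hM, hradicand]
    ring
  have hdisc : discrim (μ ^ 2 / 4) M 1 = Q ^ 2 := by
    rw [discrim, hM, Real.sq_sqrt (by positivity)]
    ring
  have hpos {t : ℝ} (ht : 0 < t) : 0 < μ ^ 2 / 4 * t ^ 2 + M * t + 1 := by positivity
  have ht : 0 < ‖x‖⁻¹ := inv_pos.2 (norm_pos_iff.2 hx)
  have hderiv : ∀ᶠ t in nhds ‖x‖⁻¹,
      HasDerivAt (fun t => √(μ ^ 2 / 4 * t ^ 2 + M * t + 1) - 1 - μ / 2 * t)
        ((2 * (μ ^ 2 / 4) * t + M) / (2 * √(μ ^ 2 / 4 * t ^ 2 + M * t + 1)) - μ / 2) t := by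
    filter_upwards [lt_mem_nhds ht] with t ht
    simpa using ((hasDerivAt_sqrt_quadratic (hpos ht)).sub_const 1).fun_sub
      ((hasDerivAt_id' t).const_mul (μ / 2))
  rw [lap_eq_laplacian, huplus, laplacian_comp_inv_norm finrank_euclideanSpace_fin hx hderiv
    ((hasDerivAt_deriv_sqrt_quadratic (hpos ht)).sub_const (μ / 2)), hdisc, phiPlus, ← hM,
    hradicand, div_div]
  ring

end ConformalFactor

section CurvatureBound

lemma sq_add_sq_le_norm_sq {ι : Type*} [Fintype ι] (x : EuclideanSpace ℝ ι) {i j : ι}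
    (hij : i ≠ j) : x i ^ 2 + x j ^ 2 ≤ ‖x‖ ^ 2 := by
  classical
  rw [EuclideanSpace.real_norm_sq_eq, ← Finset.sum_pair (f := fun k => x k ^ 2) hij]
  exact Finset.sum_le_univ_sum_of_nonneg fun k => sq_nonneg _

lemma abs_mul_sub_mul_le_norm_mul_norm {ι : Type*} [Fintype ι] (x y : EuclideanSpace ℝ ι)
    (i j : ι) : |x i * y j - x j * y i| ≤ ‖x‖ * ‖y‖ := by
  rcases eq_or_ne i j with rfl | hij
  · simpa [mul_comm] using mul_nonneg (norm_nonneg x) (norm_nonneg y)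
  refine abs_le_of_sq_le_sq ?_ (by positivity)
  calc (x i * y j - x j * y i) ^ 2 ≤ (x i ^ 2 + x j ^ 2) * (y i ^ 2 + y j ^ 2) := by
        linarith [sq_nonneg (x i * y i + x j * y j)]
    _ ≤ ‖x‖ ^ 2 * ‖y‖ ^ 2 := by gcongr <;> exact sq_add_sq_le_norm_sq _ hij
    _ = (‖x‖ * ‖y‖) ^ 2 := (mul_pow _ _ _).symm

theorem Ksq_le (A J : ℝ) (P x : E3) :
    Ksq A J P x ≤ (6 * |A| ^ 2 + 18 * |J| ^ 2) / ‖x‖ ^ 6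
      + (12 * |A| + 18 * |J|) * ‖P‖ / ‖x‖ ^ 5 + 27 / 2 * ‖P‖ ^ 2 / ‖x‖ ^ 4 := by
  have hn : ‖‖x‖⁻¹ • x‖ ≤ 1 := by
    rw [norm_smul, norm_inv, norm_norm]
    exact inv_mul_le_one
  have hsin : (x 0 ^ 2 + x 1 ^ 2) / ‖x‖ ^ 2 ≤ 1 :=
    div_le_one_of_le₀ (sq_add_sq_le_norm_sq x (by decide)) (by positivity)
  have hinner : |⟪P, ‖x‖⁻¹ • x⟫| ≤ ‖P‖ :=
    (abs_real_inner_le_norm _ _).trans (mul_le_of_le_one_right (norm_nonneg P) hn)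
  have hcross : |‖x‖⁻¹ * x 0 * P 1 - ‖x‖⁻¹ * x 1 * P 0| ≤ ‖P‖ :=
    (abs_mul_sub_mul_le_norm_mul_norm (‖x‖⁻¹ • x) P 0 1).trans
      (mul_le_of_le_one_left (norm_nonneg P) hn)
  have hAinner : A * ⟪P, ‖x‖⁻¹ • x⟫ ≤ |A| * ‖P‖ :=
    (le_abs_self _).trans (by rw [abs_mul]; gcongr)
  have hJcross : J * (‖x‖⁻¹ * x 0 * P 1 - ‖x‖⁻¹ * x 1 * P 0) ≤ |J| * ‖P‖ :=
    (le_abs_self _).trans (by rw [abs_mul]; gcongr)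
  have hJsin := mul_le_mul_of_nonneg_left hsin (sq_nonneg J)
  have hinner_sq : ⟪P, ‖x‖⁻¹ • x⟫ ^ 2 ≤ ‖P‖ ^ 2 := sq_le_sq' (abs_le.1 hinner).1 (abs_le.1 hinner).2
  rw [Ksq, sq_abs, sq_abs, ← div_div _ 2]
  gcongr ?_ / _ + ?_ / _ + ?_ / _
  · linarith [mul_div_assoc (3 * J ^ 2) (x 0 ^ 2 + x 1 ^ 2) (‖x‖ ^ 2)]
  · linarith
  · linarith

lemma quadratic_le_mul_one_add_mul_sq {a j p q t : ℝ} (ha : 0 ≤ a) (hj : 0 ≤ j) (hp : 0 ≤ p)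
    (hq : 0 ≤ q) (ht : 0 ≤ t) (h : 7 * p ^ 2 + 3 * a + 9 * j ≤ q ^ 2) :
    (6 * a ^ 2 + 18 * j ^ 2) * t ^ 2 + (12 * a + 18 * j) * p * t + 27 / 2 * p ^ 2 ≤
      2 * (7 * p ^ 2 + 3 * a + 9 * j) * (1 + q * t) ^ 2 := by
  set m := 7 * p ^ 2 + 3 * a + 9 * j with hm
  have hajm : 3 * a + 9 * j ≤ m := by linarith [sq_nonneg p]
  have hpq : p ≤ q := abs_le_of_sq_le_sq' (by nlinarith only [h, hm, ha, hj]) hq |>.2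
  have hquad : 6 * a ^ 2 + 18 * j ^ 2 ≤ 2 * m * q ^ 2 := by
    have : (3 * a + 9 * j) * (3 * a + 9 * j) ≤ m * q ^ 2 := by gcongr; exact hajm.trans h
    nlinarith only [this, mul_nonneg ha hj, sq_nonneg a, sq_nonneg j]
  have hlin : (12 * a + 18 * j) * p ≤ 4 * m * q := by
    have : (3 * a + 9 * j) * p ≤ m * q := by gcongr
    linarith [mul_nonneg hj hp]
  have hconst : 27 / 2 * p ^ 2 ≤ 2 * m := by linarith [sq_nonneg p]
  calc _ ≤ 2 * m * q ^ 2 * t ^ 2 + 4 * m * q * t + 2 * m := by gcongr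
    _ = 2 * m * (1 + q * t) ^ 2 := by ring

theorem Ksq_le_phiPlus {A J Q : ℝ} (μ : ℝ) {P x : E3} (hx : x ≠ 0)
    (hQ : 7 * ‖P‖ ^ 2 + 3 * |A| + 9 * |J| ≤ Q ^ 2) :
    Ksq A J P x ≤
      2 * (7 * ‖P‖ ^ 2 + 3 * |A| + 9 * |J|) * phiPlus Q μ x ^ 4 / ‖x‖ ^ 4 := by
  have := norm_pos_iff.2 hx
  calc Ksq A J P x
      ≤ (6 * |A| ^ 2 + 18 * |J| ^ 2) / ‖x‖ ^ 6
        + (12 * |A| + 18 * |J|) * ‖P‖ / ‖x‖ ^ 5 + 27 / 2 * ‖P‖ ^ 2 / ‖x‖ ^ 4 := Ksq_le A J P x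
    _ = ((6 * |A| ^ 2 + 18 * |J| ^ 2) * ‖x‖⁻¹ ^ 2 + (12 * |A| + 18 * |J|) * ‖P‖ * ‖x‖⁻¹
        + 27 / 2 * ‖P‖ ^ 2) / ‖x‖ ^ 4 := by field_simp
    _ ≤ 2 * (7 * ‖P‖ ^ 2 + 3 * |A| + 9 * |J|) * (1 + |Q| * ‖x‖⁻¹) ^ 2 / ‖x‖ ^ 4 := by
        gcongr
        exact quadratic_le_mul_one_add_mul_sq (abs_nonneg A) (abs_nonneg J) (norm_nonneg P)
          (abs_nonneg Q) (by positivity) (by rwa [sq_abs])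
    _ ≤ 2 * (7 * ‖P‖ ^ 2 + 3 * |A| + 9 * |J|) * (phiPlus Q μ x ^ 2) ^ 2 / ‖x‖ ^ 4 := by
        gcongr
        exact one_add_abs_div_le_phiPlus_sq Q μ x
    _ = _ := by rw [← pow_mul]

end CurvatureBound

theorem uplus_supersolution_general {A J : ℝ} {P : E3} {σ : E3 → ℝ} {Q : ℝ} (μ : ℝ) {x : E3}
    (hx : x ≠ 0) (hσ : 0 ≤ σ x) (hQ : σ x + 7 * ‖P‖ ^ 2 + 3 * |A| + 9 * |J| ≤ Q ^ 2) :
    lap (uplus Q μ) x ≤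
      -Ksq A J P x / (8 * (1 + μ / (2 * ‖x‖) + uplus Q μ x) ^ 7)
        - σ x / (4 * ‖x‖ ^ 4 * (1 + μ / (2 * ‖x‖) + uplus Q μ x) ^ 3) := by
  have := norm_pos_iff.2 hx
  have hK := Ksq_le_phiPlus (A := A) (J := J) (P := P) (Q := Q) μ hx (by linarith)
  rw [add_uplus_eq_phiPlus, lap_uplus Q μ hx]
  set Φ := phiPlus Q μ x
  have hΦ : 0 < Φ := phiPlus_pos Q μ x
  set m := 7 * ‖P‖ ^ 2 + 3 * |A| + 9 * |J|
  calc -Q ^ 2 / (4 * ‖x‖ ^ 4 * Φ ^ 3) ≤ -(m + σ x) / (4 * ‖x‖ ^ 4 * Φ ^ 3) := by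
        gcongr
        linarith
    _ = -(2 * m * Φ ^ 4 / ‖x‖ ^ 4) / (8 * Φ ^ 7) - σ x / (4 * ‖x‖ ^ 4 * Φ ^ 3) := by
        field_simp
        ring
    _ ≤ _ := by gcongr

/-- `u⁺_μ` is a supersolution,
`Δu⁺_μ ≤ -K²/(8(Φ⁺_μ)⁷) - 2πρ/(Φ⁺_μ)³` on `ℝ³∖{0}`, where `Φ⁺_μ = 1 + μ/(2r) + u⁺_μ`. -/
theorem uplus_supersolution
    (A J : ℝ) (hA : 0 ≤ A) (P : E3)
    (σ : E3 → ℝ) (hσsmooth : ContDiff ℝ (⊤ : ℕ∞) σ) (hσnonneg : ∀ x, 0 ≤ σ x)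
    (hσbdd : ∃ C, ∀ x, σ x ≤ C)
    (Q : ℝ) (hQ : 0 < Q)
    (hQ2 : sSup (Set.range σ) + 7*‖P‖^2 + 3*A + 9*|J| ≤ Q^2)
    (μ : ℝ) (hμ : 0 < μ) :
    ∀ x : E3, x ≠ 0 →
      lap (uplus Q μ) x ≤
        - Ksq A J P x / (8 * (1 + μ / (2*‖x‖) + uplus Q μ x)^7)
          - σ x / (4 * ‖x‖^4 * (1 + μ / (2*‖x‖) + uplus Q μ x)^3) := by
  intro x hx
  have hσx : σ x ≤ sSup (Set.range σ) :=
    le_csSup (bddAbove_def.2 (by simpa using hσbdd)) (Set.mem_range_self x)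
  exact uplus_supersolution_general μ hx (hσnonneg x) (by rw [abs_of_nonneg hA]; linarith)
end
end

section
/- Assume A > 0 or J ≠ 0. There exists a unique positive solution V ∈ C^∞(S²) of the equation Δ̃V − V/4 = −(3A² + 9J² sin²θ)/(4V⁷) − σ₀/(4V³) on the unit sphere S², and there exist positive constants c₋, c₊ with c₋ ≤ V ≤ c₊. -/
open MeasureTheory Real Filter Metric Set
open scoped ENNReal RealInnerProductSpace NNReal

noncomputable section

/-! The Laplacian is realised as `∑ᵢ Xᵢ²`, with `Xᵢ` the derivative along the `i`-th infinitesimal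
rotation. On a finite-dimensional rotation-invariant space of polynomials, `c - Δ̃` with `c > 0` is
injective by the maximum principle, hence surjective. The maximum principle passes to uniform
limits, so by density of the polynomials `c u - Δ̃u = h` has a solution `u`, in the closure of `Δ̃`,
for every continuous `h`.

Comparing `f` with its reflection in the plane equidistant from two points of the sphere bounds the
Lipschitz constant of `f` by a multiple of `sup |Δ̃f|`. Hence the domain of the closure consists of
`C¹` functions, and since the `Xᵢ` commute with `Δ̃`, regularity of `Δ̃u` bootstraps to `u`.

Write the equation as `Δ̃V = V / 4 - N(V)`, with `N ≥ 0` decreasing in `V > 0`. Truncating `N` below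
a positive level makes it Lipschitz, and the truncated equation is solved by a contraction. If the
source is positive at `n`, then `δ exp (k (⟪n, ·⟫ - 1))` is a positive subsolution for large `k` and
small `δ`; comparison with it keeps the solution above the truncation level, comparison with a
constant bounds it from above, and the monotonicity of `V / 4 - N(V)` gives uniqueness.
-/

open scoped Topology ContDiff

local notation "𝕊²" => sphere (0 : E3) 1

/-! ### Differentiation along linear vector fields -/

section LinearVectorFields

variable {E F : Type*} [NormedAddCommGroup E] [NormedSpace ℝ E]
  [NormedAddCommGroup F] [NormedSpace ℝ F] {B : E →L[ℝ] E} {f g : E → F} {y : E}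

/-- The derivative of `f` along the linear vector field `y ↦ B y`. -/
def linDeriv (B : E →L[ℝ] E) (f : E → F) (y : E) : F := fderiv ℝ f y (B y)

lemma linDeriv_of_hasFDerivAt {f' : E →L[ℝ] F} (hf : HasFDerivAt f f' y) :
    linDeriv B f y = f' (B y) := by
  rw [linDeriv, hf.fderiv]

lemma contDiffAt_linDeriv {m n : WithTop ℕ∞} (hf : ContDiffAt ℝ n f y) (hmn : m + 1 ≤ n) :
    ContDiffAt ℝ m (linDeriv B f) y :=
  (hf.fderiv_right hmn).clm_apply B.contDiff.contDiffAt

lemma linDeriv_linDeriv (hf : ContDiffAt ℝ 2 f y) :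
    linDeriv B (linDeriv B f) y =
      iteratedFDeriv ℝ 2 f y ![B y, B y] + fderiv ℝ f y (B (B y)) := by
  have hf' : DifferentiableAt ℝ (fderiv ℝ f) y :=
    (hf.fderiv_right (m := 1) (by norm_num)).differentiableAt (by norm_num)
  have h : HasFDerivAt (linDeriv B f) _ y := hf'.hasFDerivAt.clm_apply B.hasFDerivAt
  rw [linDeriv_of_hasFDerivAt h]
  simp [iteratedFDeriv_two_apply, add_comm]

lemma linDeriv_add (hf : DifferentiableAt ℝ f y) (hg : DifferentiableAt ℝ g y) :
    linDeriv B (f + g) y = linDeriv B f y + linDeriv B g y := by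
  simp [linDeriv, fderiv_add hf hg]

lemma linDeriv_const_smul (c : ℝ) (f : E → F) : linDeriv B (c • f) = c • linDeriv B f := by
  funext y
  simp [linDeriv, fderiv_const_smul_field]

lemma linDeriv_mul {f g : E → ℝ} (hf : DifferentiableAt ℝ f y) (hg : DifferentiableAt ℝ g y) :
    linDeriv B (f * g) y = f y * linDeriv B g y + linDeriv B f y * g y := by
  simp [linDeriv, fderiv_mul hf hg, mul_comm]

lemma linDeriv_const (v : F) : linDeriv B (fun _ ↦ v) = 0 := by
  funext y
  simp [linDeriv]

lemma linDeriv_clm (φ : E →L[ℝ] F) : linDeriv B φ = φ ∘L B := by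
  funext y
  simp [linDeriv]

end LinearVectorFields

/-! ### Rotations of `ℝ³` -/

/-- The infinitesimal rotation `y ↦ eᵢ × y` about the `i`-th coordinate axis. -/
def rotationGenerator (i : Fin 3) : E3 →L[ℝ] E3 :=
  (EuclideanSpace.proj (i + 1) : E3 →L[ℝ] ℝ).smulRight (EuclideanSpace.single (i + 2) 1)
    - (EuclideanSpace.proj (i + 2) : E3 →L[ℝ] ℝ).smulRight (EuclideanSpace.single (i + 1) 1)

lemma rotationGenerator_apply (i : Fin 3) (y : E3) :
    rotationGenerator i y = y (i + 1) • EuclideanSpace.single (i + 2) (1 : ℝ)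
      - y (i + 2) • EuclideanSpace.single (i + 1) (1 : ℝ) := by
  simp [rotationGenerator]

lemma rotationGenerator_cubed (i : Fin 3) (y : E3) :
    rotationGenerator i (rotationGenerator i (rotationGenerator i y)) =
      -rotationGenerator i y := by
  ext j
  fin_cases i <;> fin_cases j <;> simp [rotationGenerator_apply]

lemma sum_rotationGenerator_sq (y : E3) :
    ∑ i, rotationGenerator i (rotationGenerator i y) = (-2 : ℝ) • y := by
  ext j
  fin_cases j <;> simp [Fin.sum_univ_three, rotationGenerator_apply] <;> ring

lemma E3.norm_sq_eq (y : E3) : ‖y‖ ^ 2 = y 0 ^ 2 + y 1 ^ 2 + y 2 ^ 2 := by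
  simp [EuclideanSpace.norm_sq_eq, Fin.sum_univ_three]

lemma norm_rotationGenerator_le (i : Fin 3) (y : E3) : ‖rotationGenerator i y‖ ≤ ‖y‖ := by
  rw [← sq_le_sq₀ (norm_nonneg _) (norm_nonneg _), E3.norm_sq_eq, E3.norm_sq_eq]
  fin_cases i <;> simp [rotationGenerator_apply] <;>
    nlinarith [sq_nonneg (y 0), sq_nonneg (y 1), sq_nonneg (y 2)]

/-- Lagrange's identity `∑ᵢ ⟪eᵢ × y, v⟫ ⟪eᵢ × y, w⟫ = ‖y‖² ⟪v, w⟫ - ⟪y, v⟫ ⟪y, w⟫`, with a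
bilinear map in place of the tensor `⟪·, v⟫ ⟪·, w⟫`. -/
lemma sum_rotationGenerator_rotationGenerator {F : Type*} [AddCommGroup F] [Module ℝ F]
    (D : E3 →ₗ[ℝ] E3 →ₗ[ℝ] F) (y : E3) :
    ∑ i, D (rotationGenerator i y) (rotationGenerator i y) =
      ‖y‖ ^ 2 • ∑ i, D (EuclideanSpace.single i 1) (EuclideanSpace.single i 1) - D y y := by
  have hy : y = y 0 • EuclideanSpace.single 0 (1 : ℝ) + y 1 • EuclideanSpace.single 1 (1 : ℝ)
      + y 2 • EuclideanSpace.single 2 (1 : ℝ) := by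
    ext j
    fin_cases j <;> simp
  conv_rhs => enter [2]; rw [hy]
  simp only [rotationGenerator_apply, Fin.isValue, map_sub, map_smul, LinearMap.sub_apply,
    LinearMap.smul_apply, Finset.sum_sub_distrib, Fin.sum_univ_three, zero_add, Fin.reduceAdd,
    E3.norm_sq_eq, smul_add, map_add, LinearMap.add_apply]
  module

lemma norm_rodrigues (i : Fin 3) (t : ℝ) (y : E3) :
    ‖y + sin t • rotationGenerator i y
      + (1 - cos t) • rotationGenerator i (rotationGenerator i y)‖ = ‖y‖ := by
  rw [← sq_eq_sq₀ (norm_nonneg _) (norm_nonneg _), E3.norm_sq_eq, E3.norm_sq_eq]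
  have := sin_sq_add_cos_sq t
  fin_cases i <;> simp [rotationGenerator_apply] <;> grind

/-- The rotation by the angle `t` about the `i`-th coordinate axis (Rodrigues' formula). -/
def axisRotation (i : Fin 3) (t : ℝ) : E3 ≃ₗᵢ[ℝ] E3 :=
  LinearIsometry.toLinearIsometryEquiv
    { toLinearMap := LinearMap.id + sin t • (rotationGenerator i).toLinearMap
        + (1 - cos t) • (rotationGenerator i).toLinearMap ∘ₗ (rotationGenerator i).toLinearMap
      norm_map' := fun y ↦ by simpa using norm_rodrigues i t y } rfl

lemma axisRotation_apply (i : Fin 3) (t : ℝ) (y : E3) :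
    axisRotation i t y = y + sin t • rotationGenerator i y
      + (1 - cos t) • rotationGenerator i (rotationGenerator i y) := rfl

@[simp]
lemma axisRotation_zero_apply (i : Fin 3) (y : E3) : axisRotation i 0 y = y := by
  simp [axisRotation_apply]

lemma hasDerivAt_axisRotation (i : Fin 3) (y : E3) (t : ℝ) :
    HasDerivAt (fun s ↦ axisRotation i s y) (rotationGenerator i (axisRotation i t y)) t := by
  have h : HasDerivAt (fun s ↦ axisRotation i s y) _ t :=
    (((hasDerivAt_sin t).smul_const (rotationGenerator i y)).const_add y).add
      (((hasDerivAt_cos t).const_sub 1).smul_const (rotationGenerator i (rotationGenerator i y)))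
  refine h.congr_deriv ?_
  simp only [axisRotation_apply, map_add, map_smul, rotationGenerator_cubed]
  module

lemma tendsto_axisRotation_zero (i : Fin 3) (y : E3) :
    Tendsto (fun t ↦ axisRotation i t y) (𝓝 0) (𝓝 y) := by
  simpa using (hasDerivAt_axisRotation i y 0).continuousAt.tendsto

lemma norm_axisRotation_sub_le (i : Fin 3) (t : ℝ) (y : E3) :
    ‖axisRotation i t y - y‖ ≤ ‖y‖ * |t| := by
  simpa using convex_univ.norm_image_sub_le_of_norm_hasDerivWithin_le (C := ‖y‖)
    (fun s _ ↦ (hasDerivAt_axisRotation i y s).hasDerivWithinAt)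
    (fun s _ ↦ (norm_rotationGenerator_le i _).trans_eq ((axisRotation i s).norm_map y))
    (mem_univ 0) (mem_univ t)

lemma hasDerivAt_comp_axisRotation {F : Type*} [NormedAddCommGroup F] [NormedSpace ℝ F] {f : E3 → F}
    {i : Fin 3} {y : E3} {t : ℝ} (hf : DifferentiableAt ℝ f (axisRotation i t y)) :
    HasDerivAt (fun s ↦ f (axisRotation i s y))
      (linDeriv (rotationGenerator i) f (axisRotation i t y)) t :=
  hf.hasFDerivAt.comp_hasDerivAt t (hasDerivAt_axisRotation i y t)

/-! ### The angular Laplacian -/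

/-- The angular Laplacian `∑ᵢ Xᵢ²`, where `Xᵢ` is the derivative along the `i`-th infinitesimal
rotation. It restricts to the Laplace-Beltrami operator on every sphere centred at the origin,
without any homogeneity requirement on `f`. -/
def angularLaplacian (f : E3 → ℝ) : E3 → ℝ :=
  ∑ i, linDeriv (rotationGenerator i) (linDeriv (rotationGenerator i) f)

section

variable {f g : E3 → ℝ} {y p : E3}

lemma angularLaplacian_apply (f : E3 → ℝ) (y : E3) :
    angularLaplacian f y =
      ∑ i, linDeriv (rotationGenerator i) (linDeriv (rotationGenerator i) f) y := by
  simp [angularLaplacian]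

lemma continuousAt_angularLaplacian (hf : ContDiffAt ℝ 2 f y) :
    ContinuousAt (angularLaplacian f) y := by
  have h (i : Fin 3) :
      ContDiffAt ℝ 0 (linDeriv (rotationGenerator i) (linDeriv (rotationGenerator i) f)) y :=
    contDiffAt_linDeriv (contDiffAt_linDeriv hf (m := 1) (by norm_num)) (by norm_num)
  exact (ContDiffAt.sum fun i _ ↦ h i).continuousAt.congr
    (.of_forall fun z ↦ (angularLaplacian_apply f z).symm)

lemma angularLaplacian_eq (hf : ContDiffAt ℝ 2 f y) :
    angularLaplacian f y =
      ‖y‖ ^ 2 * lap f y - iteratedFDeriv ℝ 2 f y ![y, y] - 2 * fderiv ℝ f y y := by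
  have hess := sum_rotationGenerator_rotationGenerator
    ((ContinuousLinearMap.coeLM ℝ).comp (fderiv ℝ (fderiv ℝ f) y).toLinearMap) y
  have grad := congrArg (fderiv ℝ f y) (sum_rotationGenerator_sq y)
  simp only [LinearMap.comp_apply, ContinuousLinearMap.coe_coe, ContinuousLinearMap.coeLM_apply,
    smul_eq_mul, map_sum, map_smul] at hess grad
  simp only [angularLaplacian_apply, linDeriv_linDeriv hf, Finset.sum_add_distrib, grad, lap,
    iteratedFDeriv_two_apply, Matrix.cons_val_zero, Matrix.cons_val_one, hess]
  ring

lemma angularLaplacian_add (hf : ContDiffAt ℝ 2 f y) (hg : ContDiffAt ℝ 2 g y) :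
    angularLaplacian (f + g) y = angularLaplacian f y + angularLaplacian g y := by
  have hfg : ContDiffAt ℝ 2 (f + g) y := hf.add hg
  have hf' := hf.differentiableAt (by norm_num)
  have hg' := hg.differentiableAt (by norm_num)
  simp only [angularLaplacian_apply, ← Finset.sum_add_distrib]
  refine Finset.sum_congr rfl fun i _ ↦ ?_
  rw [linDeriv_linDeriv hf, linDeriv_linDeriv hg, linDeriv_linDeriv hfg,
    iteratedFDeriv_add_apply hf hg, fderiv_add hf' hg']
  exact add_add_add_comm ..

lemma angularLaplacian_const_smul (c : ℝ) (f : E3 → ℝ) :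
    angularLaplacian (c • f) = c • angularLaplacian f := by
  simp only [angularLaplacian, linDeriv_const_smul, Finset.smul_sum]

lemma angularLaplacian_const (a : ℝ) : angularLaplacian (fun _ ↦ a) = 0 := by
  funext y
  simp [angularLaplacian_apply, linDeriv_const, Pi.zero_def]

lemma angularLaplacian_sub (hf : ContDiffAt ℝ 2 f y) (hg : ContDiffAt ℝ 2 g y) :
    angularLaplacian (f - g) y = angularLaplacian f y - angularLaplacian g y := by
  have hg' : ContDiffAt ℝ 2 ((-1 : ℝ) • g) y := contDiffAt_const.smul hg
  have h := angularLaplacian_add hf hg'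
  rw [angularLaplacian_const_smul] at h
  simpa [sub_eq_add_neg] using h

lemma lap_eq_sum_orthonormalBasis (b : OrthonormalBasis (Fin 3) ℝ E3) :
    lap f y = ∑ i, iteratedFDeriv ℝ 2 f y ![b i, b i] := by
  have h := congrFun ((InnerProductSpace.laplacian_eq_iteratedFDeriv_orthonormalBasis f
    (EuclideanSpace.basisFun (Fin 3) ℝ)).symm.trans
      (InnerProductSpace.laplacian_eq_iteratedFDeriv_orthonormalBasis f b)) y
  simpa [lap] using h

lemma angularLaplacian_comp_isometry (R : E3 ≃ₗᵢ[ℝ] E3) (hf : ContDiffAt ℝ 2 f (R y)) :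
    angularLaplacian (f ∘ R) y = angularLaplacian f (R y) := by
  have hess (v w : E3) :
      iteratedFDeriv ℝ 2 (f ∘ R) y ![v, w] = iteratedFDeriv ℝ 2 f (R y) ![R v, R w] := by
    have := R.toContinuousLinearEquiv.iteratedFDerivWithin_comp_right f uniqueDiffOn_univ
      (mem_univ (R y)) 2
    simp only [preimage_univ, iteratedFDerivWithin_univ] at this
    rw [show f ∘ R = f ∘ R.toContinuousLinearEquiv from rfl, this]
    simp [iteratedFDeriv_two_apply]
  have grad : fderiv ℝ (f ∘ R) y y = fderiv ℝ f (R y) (R y) :=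
    congrArg (· y) (R.toContinuousLinearEquiv.comp_right_fderiv (f := f))
  rw [angularLaplacian_eq (hf.comp y R.contDiff.contDiffAt), angularLaplacian_eq hf, grad,
    lap_eq_sum_orthonormalBasis (f := f) ((EuclideanSpace.basisFun (Fin 3) ℝ).map R), lap]
  simp [hess]

lemma deriv_deriv_nonpos_of_isLocalMax {g : ℝ → ℝ} {t : ℝ} (hg : IsLocalMax g t)
    (hc : ContinuousAt g t) : deriv (deriv g) t ≤ 0 := by
  by_contra! hpos
  have hmin : IsLocalMin g t := isLocalMin_of_deriv_deriv_pos hpos hg.deriv_eq_zero hc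
  have hconst : g =ᶠ[𝓝 t] fun _ ↦ g t := by
    filter_upwards [hg, hmin] with s using le_antisymm
  simp [hconst.deriv.deriv_eq] at hpos

lemma angularLaplacian_nonpos_of_isLocalMaxOn (hf : ContDiffAt ℝ 2 f p)
    (hmax : IsLocalMaxOn f (sphere 0 ‖p‖) p) : angularLaplacian f p ≤ 0 := by
  rw [angularLaplacian_apply]
  refine Finset.sum_nonpos fun i _ ↦ ?_
  set γ : ℝ → E3 := fun t ↦ axisRotation i t p
  set X := linDeriv (rotationGenerator i) (F := ℝ)
  have hγ : Tendsto γ (𝓝 0) (𝓝 p) := tendsto_axisRotation_zero i p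
  have hγ0 : γ 0 = p := axisRotation_zero_apply i p
  have hγ_mem (t : ℝ) : γ t ∈ sphere (0 : E3) ‖p‖ := by simp [γ]
  have hfst : deriv (f ∘ γ) =ᶠ[𝓝 0] X f ∘ γ := by
    filter_upwards [hγ.eventually (hf.eventually (by simp))] with t ht
    exact (hasDerivAt_comp_axisRotation (ht.differentiableAt (by norm_num))).deriv
  have hsnd : deriv (deriv (f ∘ γ)) 0 = X (X f) p := by
    have hXf : ContDiffAt ℝ 1 (X f) (γ 0) :=
      hγ0 ▸ contDiffAt_linDeriv hf (by norm_num)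
    rw [hfst.deriv_eq, ← hγ0]
    exact (hasDerivAt_comp_axisRotation (hXf.differentiableAt (by norm_num))).deriv
  rw [← hsnd]
  refine deriv_deriv_nonpos_of_isLocalMax ?_ (ContinuousAt.comp (hγ0 ▸ hf.continuousAt) ?_)
  · filter_upwards [(tendsto_nhdsWithin_iff.2 ⟨hγ, .of_forall hγ_mem⟩).eventually hmax] with t ht
    simpa [hγ0] using ht
  · simpa [ContinuousAt, hγ0] using hγ

lemma exists_isMaxOn_angularLaplacian_nonpos {r : ℝ} (hr : 0 ≤ r)
    (hf : ∀ p ∈ sphere (0 : E3) r, ContDiffAt ℝ 2 f p) :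
    ∃ q ∈ sphere (0 : E3) r, IsMaxOn f (sphere 0 r) q ∧ angularLaplacian f q ≤ 0 := by
  obtain ⟨q, hq, hmax⟩ := (isCompact_sphere (0 : E3) r).exists_isMaxOn
    (NormedSpace.sphere_nonempty.2 hr) fun p hp ↦ (hf p hp).continuousAt.continuousWithinAt
  refine ⟨q, hq, hmax, angularLaplacian_nonpos_of_isLocalMaxOn (hf q hq) ?_⟩
  rw [mem_sphere_zero_iff_norm.1 hq]
  exact hmax.localize

lemma mul_le_of_mul_sub_angularLaplacian_le {r c M : ℝ} (hr : 0 ≤ r) (hc : 0 ≤ c)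
    (hf : ∀ p ∈ sphere (0 : E3) r, ContDiffAt ℝ 2 f p)
    (h : ∀ p ∈ sphere (0 : E3) r, c * f p - angularLaplacian f p ≤ M) :
    ∀ p ∈ sphere (0 : E3) r, c * f p ≤ M := by
  intro p hp
  obtain ⟨q, hq, hmax, hLq⟩ := exists_isMaxOn_angularLaplacian_nonpos hr hf
  have hpq : f p ≤ f q := hmax hp
  linarith [h q hq, mul_le_mul_of_nonneg_left hpq hc]

lemma mul_abs_le_of_abs_mul_sub_angularLaplacian_le {r c M : ℝ} (hr : 0 ≤ r) (hc : 0 ≤ c)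
    (hf : ∀ p ∈ sphere (0 : E3) r, ContDiffAt ℝ 2 f p)
    (h : ∀ p ∈ sphere (0 : E3) r, |c * f p - angularLaplacian f p| ≤ M) :
    ∀ p ∈ sphere (0 : E3) r, c * |f p| ≤ M := by
  intro p hp
  have hupper := mul_le_of_mul_sub_angularLaplacian_le hr hc hf
    (fun q hq ↦ (le_abs_self _).trans (h q hq)) p hp
  have hlower := mul_le_of_mul_sub_angularLaplacian_le (f := (-1 : ℝ) • f) hr hc
    (fun q hq ↦ contDiffAt_const.smul (hf q hq))
    (fun q hq ↦ le_trans (by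
      simp only [angularLaplacian_const_smul, Pi.smul_apply, smul_eq_mul]
      linarith [neg_abs_le (c * f q - angularLaplacian f q)]) (h q hq)) p hp
  simp only [Pi.smul_apply, smul_eq_mul] at hlower
  rw [← abs_of_nonneg hc, ← abs_mul]
  exact abs_le.2 ⟨by linarith, hupper⟩

end

/-! ### The two-point gradient estimate -/

section

variable {f : E3 → ℝ} {M : ℝ}

lemma angularLaplacian_zonal {φ φ' : ℝ → ℝ} {φ'' : ℝ} (n y : E3)
    (hφ : ∀ z, HasDerivAt φ (φ' z) z) (hφ' : HasDerivAt φ' φ'' ⟪n, y⟫) :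
    angularLaplacian (fun x ↦ φ ⟪n, x⟫) y =
      φ'' * (‖n‖ ^ 2 * ‖y‖ ^ 2 - ⟪n, y⟫ ^ 2) - 2 * ⟪n, y⟫ * φ' ⟪n, y⟫ := by
  have hX (i : Fin 3) : linDeriv (rotationGenerator i) (fun x ↦ φ ⟪n, x⟫) =
      fun x ↦ φ' ⟪n, x⟫ * ⟪n, rotationGenerator i x⟫ := by
    funext x
    exact linDeriv_of_hasFDerivAt ((hφ _).comp_hasFDerivAt x (innerSL ℝ n).hasFDerivAt)
  have hXX (i : Fin 3) :
      linDeriv (rotationGenerator i) (fun x ↦ φ' ⟪n, x⟫ * ⟪n, rotationGenerator i x⟫) y =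
        φ'' * ⟪n, rotationGenerator i y⟫ ^ 2
          + φ' ⟪n, y⟫ * ⟪n, rotationGenerator i (rotationGenerator i y)⟫ := by
    have h : HasFDerivAt (fun x ↦ φ' ⟪n, x⟫ * ⟪n, rotationGenerator i x⟫) _ y :=
      (hφ'.comp_hasFDerivAt y (innerSL ℝ n).hasFDerivAt).mul
        (innerSL ℝ n ∘L rotationGenerator i).hasFDerivAt
    rw [linDeriv_of_hasFDerivAt h]
    simp only [Function.comp_apply, add_apply, smul_apply, ContinuousLinearMap.comp_apply,
      coe_innerSL_apply, smul_eq_mul]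
    ring
  have hlagrange := sum_rotationGenerator_rotationGenerator
    ((innerₛₗ ℝ n).smulRight (innerₛₗ ℝ n)) y
  have hbasis : ∑ i, ⟪n, EuclideanSpace.single i (1 : ℝ)⟫ ^ 2 = ‖n‖ ^ 2 := by
    simp [EuclideanSpace.norm_sq_eq, EuclideanSpace.inner_single_right]
  have hsq := congrArg (fun v ↦ ⟪n, v⟫) (sum_rotationGenerator_sq y)
  simp only [inner_sum, inner_smul_right, LinearMap.smulRight_apply, innerₛₗ_apply_apply,
    LinearMap.smul_apply, smul_eq_mul, ← sq, hbasis] at hlagrange hsq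
  simp only [angularLaplacian_apply, hX, hXX, Finset.sum_add_distrib, ← Finset.mul_sum, hlagrange,
    hsq]
  ring

lemma nonpos_on_hemisphere_of_angularLaplacian_pos {n : E3} (hf : ∀ p ∈ 𝕊², ContDiffAt ℝ 2 f p)
    (hequator : ∀ p ∈ 𝕊², ⟪n, p⟫ = 0 → f p ≤ 0)
    (hL : ∀ p ∈ 𝕊², 0 < ⟪n, p⟫ → 0 < angularLaplacian f p) :
    ∀ p ∈ 𝕊², 0 ≤ ⟪n, p⟫ → f p ≤ 0 := by
  intro p hp hpn
  have hinner : Continuous fun y : E3 ↦ ⟪n, y⟫ := continuous_const.inner continuous_id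
  obtain ⟨q, ⟨hq, hqn⟩, hmax⟩ := ((isCompact_sphere (0 : E3) 1).inter_right
    (isClosed_le continuous_const hinner)).exists_isMaxOn ⟨p, hp, hpn⟩
    fun y hy ↦ (hf y hy.1).continuousAt.continuousWithinAt
  refine (hmax ⟨hp, hpn⟩).trans (hqn.eq_or_lt.elim (fun h ↦ hequator q hq h.symm) fun hpos ↦ ?_)
  refine absurd (angularLaplacian_nonpos_of_isLocalMaxOn (hf q hq) ?_) (hL q hq hpos).not_ge
  rw [mem_sphere_zero_iff_norm.1 hq]
  filter_upwards [self_mem_nhdsWithin, mem_nhdsWithin_of_mem_nhds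
    ((isOpen_lt continuous_const hinner).mem_nhds hpos)] with x hx hxn using hmax ⟨hx, hxn.le⟩

lemma angularLaplacian_inner_quadratic (a b : ℝ) (n y : E3) :
    angularLaplacian (fun x ↦ a * ⟪n, x⟫ + b * ⟪n, x⟫ ^ 2) y =
      2 * b * (‖n‖ ^ 2 * ‖y‖ ^ 2 - ⟪n, y⟫ ^ 2) - 2 * ⟪n, y⟫ * (a + 2 * b * ⟪n, y⟫) := by
  refine angularLaplacian_zonal (φ := fun z ↦ a * z + b * z ^ 2) (φ' := fun z ↦ a + 2 * b * z) n y
    (fun z ↦ ?_) ?_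
  · exact (((hasDerivAt_id z).const_mul a).add ((hasDerivAt_pow 2 z).const_mul b)).congr_deriv
      (by norm_num; ring)
  · simpa using ((hasDerivAt_id ⟪n, y⟫).const_mul (2 * b)).const_add a

lemma inner_mem_Icc_of_mem_sphere {n p : E3} (hn : n ∈ 𝕊²) (hp : p ∈ 𝕊²) : ⟪n, p⟫ ∈ Icc (-1) 1 := by
  have h := abs_real_inner_le_norm n p
  rw [mem_sphere_zero_iff_norm.1 hn, mem_sphere_zero_iff_norm.1 hp, one_mul] at h
  exact abs_le.1 h

/-- The function `f - f ∘ R - (4 M z - M z²)`, with `z = ⟪n, ·⟫` and `R` the reflection along `n`,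
vanishes on the mirror of `R` and is strictly subharmonic on the open hemisphere `z > 0`. -/
lemma sub_comp_reflection_le (hM : 0 < M) (hf : ∀ p ∈ 𝕊², ContDiffAt ℝ 2 f p)
    (hL : ∀ p ∈ 𝕊², |angularLaplacian f p| ≤ M) {n : E3} (hn : ‖n‖ = 1) :
    ∀ y ∈ 𝕊², 0 ≤ ⟪n, y⟫ → f y - f ((ℝ ∙ n)ᗮ.reflection y) ≤ 4 * M * ⟪n, y⟫ := by
  set R := (ℝ ∙ n)ᗮ.reflection
  have hR_mem {y : E3} (hy : y ∈ 𝕊²) : R y ∈ 𝕊² := by simpa using hy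
  set φ : E3 → ℝ := fun x ↦ 4 * M * ⟪n, x⟫ + -M * ⟪n, x⟫ ^ 2 with hφ_def
  have hφ (y : E3) : ContDiffAt ℝ 2 φ y := by
    simp only [hφ_def, ← innerSL_apply_apply ℝ]
    fun_prop
  have hdiff {y : E3} (hy : y ∈ 𝕊²) : ContDiffAt ℝ 2 (f ∘ R) y :=
    (hf _ (hR_mem hy)).comp y R.contDiff.contDiffAt
  have hodd {y : E3} (hy : y ∈ 𝕊²) : ContDiffAt ℝ 2 (f - f ∘ R) y := (hf y hy).sub (hdiff hy)
  have hbarrier : ∀ y ∈ 𝕊², 0 ≤ ⟪n, y⟫ → (f - f ∘ R - φ) y ≤ 0 := by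
    refine nonpos_on_hemisphere_of_angularLaplacian_pos
      (fun y hy ↦ (hodd hy).sub (hφ y)) (fun y _ hz ↦ ?_) fun y hy hz ↦ ?_
    · have hRy : R y = y := Submodule.reflection_mem_subspace_eq_self
        (Submodule.mem_orthogonal_singleton_iff_inner_right.2 hz)
      simp [hRy, hz, φ]
    · have hz1 : ⟪n, y⟫ ≤ 1 := (inner_mem_Icc_of_mem_sphere (by simpa using hn) hy).2
      rw [angularLaplacian_sub (hodd hy) (hφ y), angularLaplacian_sub (hf y hy) (hdiff hy),
        angularLaplacian_comp_isometry R (hf _ (hR_mem hy)), angularLaplacian_inner_quadratic,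
        hn, mem_sphere_zero_iff_norm.1 hy]
      have h1 := (abs_le.1 (hL y hy)).1
      have h2 := (abs_le.1 (hL (R y) (hR_mem hy))).2
      nlinarith [mul_pos (mul_pos hM hz) (show 0 < 8 - 6 * ⟪n, y⟫ by linarith)]
  intro y hy hz
  have h := hbarrier y hy hz
  simp only [φ, Pi.sub_apply, Function.comp_apply] at h
  nlinarith [mul_nonneg hM.le (sq_nonneg ⟪n, y⟫)]

lemma abs_sub_le_of_abs_angularLaplacian_le (hM : 0 < M) (hf : ∀ p ∈ 𝕊², ContDiffAt ℝ 2 f p)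
    (hL : ∀ p ∈ 𝕊², |angularLaplacian f p| ≤ M) :
    ∀ p ∈ 𝕊², ∀ q ∈ 𝕊², |f p - f q| ≤ 2 * M * ‖p - q‖ := by
  have hsub : ∀ p ∈ 𝕊², ∀ q ∈ 𝕊², f p - f q ≤ 2 * M * ‖p - q‖ := by
    intro p hp q hq
    rcases eq_or_ne p q with rfl | hpq
    · simp
    have hd : ‖p - q‖ ≠ 0 := norm_ne_zero_iff.2 (sub_ne_zero.2 hpq)
    have hnorm : ‖p‖ = ‖q‖ := by
      rw [mem_sphere_zero_iff_norm.1 hp, mem_sphere_zero_iff_norm.1 hq]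
    set n := ‖p - q‖⁻¹ • (p - q) with hn
    have hn_norm : ‖n‖ = 1 := by simp [hn, norm_smul, hd]
    have hspan : (ℝ ∙ n) = ℝ ∙ (p - q) :=
      Submodule.span_singleton_smul_eq (inv_ne_zero hd).isUnit _
    have hnp : ⟪n, p⟫ = ‖p - q‖ / 2 := by
      have h := norm_sub_sq_real p q
      rw [hn, real_inner_smul_left, inner_sub_left, real_inner_self_eq_norm_sq, real_inner_comm p q]
      rw [hnorm] at h ⊢
      field_simp
      linarith
    have h := sub_comp_reflection_le hM hf hL hn_norm p hp (by rw [hnp]; positivity)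
    rw [hnp] at h
    simp only [hspan, Submodule.reflection_sub hnorm] at h
    linarith
  intro p hp q hq
  exact abs_sub_le_iff.2 ⟨hsub p hp q hq, norm_sub_rev p q ▸ hsub q hq p hp⟩

lemma abs_linDeriv_rotationGenerator_le (hM : 0 < M) (hf : ∀ p ∈ 𝕊², ContDiffAt ℝ 2 f p)
    (hL : ∀ p ∈ 𝕊², |angularLaplacian f p| ≤ M) (i : Fin 3) :
    ∀ p ∈ 𝕊², |linDeriv (rotationGenerator i) f p| ≤ 2 * M := by
  intro p hp
  have hderiv := hasDerivAt_comp_axisRotation (i := i) (t := 0) (y := p) (f := f)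
    (by simpa using (hf p hp).differentiableAt (by norm_num))
  rw [axisRotation_zero_apply] at hderiv
  refine hderiv.le_of_lip' (by positivity) (.of_forall fun t ↦ ?_)
  have hpnorm : ‖p‖ = 1 := mem_sphere_zero_iff_norm.1 hp
  calc ‖f (axisRotation i t p) - f (axisRotation i 0 p)‖
      ≤ 2 * M * ‖axisRotation i t p - p‖ := by
        rw [axisRotation_zero_apply]
        exact abs_sub_le_of_abs_angularLaplacian_le hM hf hL _ (by simpa using hp) _ hp
    _ ≤ 2 * M * ‖t - 0‖ := by
        have h := norm_axisRotation_sub_le i t p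
        rw [hpnorm, one_mul] at h
        rw [sub_zero, Real.norm_eq_abs]
        gcongr

end

/-! ### Polynomials on the sphere -/

/-- The algebra of polynomial functions on `ℝ³`, generated by the linear functionals. -/
def polyAlgebra : Subalgebra ℝ (E3 → ℝ) :=
  Algebra.adjoin ℝ (range fun φ : E3 →L[ℝ] ℝ ↦ (φ : E3 → ℝ))

lemma clm_mem_polyAlgebra (φ : E3 →L[ℝ] ℝ) : ⇑φ ∈ polyAlgebra :=
  Algebra.subset_adjoin (mem_range_self φ)

section

variable {f h : E3 → ℝ} {c ε : ℝ}

lemma contDiff_of_mem_polyAlgebra {n : WithTop ℕ∞} (hf : f ∈ polyAlgebra) : ContDiff ℝ n f := by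
  induction hf using Algebra.adjoin_induction with
  | mem _ hx =>
    obtain ⟨φ, rfl⟩ := hx
    exact φ.contDiff
  | algebraMap r => exact contDiff_const
  | add _ _ _ _ hf hg => exact hf.add hg
  | mul _ _ _ _ hf hg => exact hf.mul hg

lemma differentiableAt_of_mem_polyAlgebra (hf : f ∈ polyAlgebra) (y : E3) :
    DifferentiableAt ℝ f y :=
  (contDiff_of_mem_polyAlgebra hf (n := 1)).differentiable (by norm_num) y

lemma comp_mem_polyAlgebra (A : E3 →L[ℝ] E3) (hf : f ∈ polyAlgebra) : f ∘ A ∈ polyAlgebra := by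
  induction hf using Algebra.adjoin_induction with
  | mem _ hx =>
    obtain ⟨φ, rfl⟩ := hx
    exact clm_mem_polyAlgebra (φ ∘L A)
  | algebraMap r => exact polyAlgebra.algebraMap_mem r
  | add _ _ _ _ hf hg => exact polyAlgebra.add_mem hf hg
  | mul _ _ _ _ hf hg => exact polyAlgebra.mul_mem hf hg

/-- Finite-dimensional spaces of polynomials that are stable under the infinitesimal rotations, on
which the angular Laplacian is therefore an endomorphism. -/
structure IsRotationModule (W : Submodule ℝ (E3 → ℝ)) : Prop where
  fg : W.FG
  le_polyAlgebra : W ≤ Subalgebra.toSubmodule polyAlgebra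
  linDeriv_mem : ∀ i, ∀ f ∈ W, linDeriv (rotationGenerator i) f ∈ W

namespace IsRotationModule

variable {V W : Submodule ℝ (E3 → ℝ)}

lemma constants : IsRotationModule (ℝ ∙ (1 : E3 → ℝ)) where
  fg := Submodule.fg_span_singleton _
  le_polyAlgebra := (Submodule.span_singleton_le_iff_mem _ _).2 polyAlgebra.one_mem
  linDeriv_mem i f hf := by
    obtain ⟨c, rfl⟩ := Submodule.mem_span_singleton.1 hf
    rw [linDeriv_const_smul, show linDeriv _ (1 : E3 → ℝ) = 0 from linDeriv_const 1, smul_zero]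
    exact Submodule.zero_mem _

lemma linearFunctionals : IsRotationModule
    (LinearMap.range (LinearMap.ltoFun ℝ E3 ℝ ℝ ∘ₗ ContinuousLinearMap.coeLM ℝ)) where
  fg := Module.Finite.iff_fg.1 inferInstance
  le_polyAlgebra := by
    rintro _ ⟨φ, rfl⟩
    exact clm_mem_polyAlgebra φ
  linDeriv_mem i := by
    rintro _ ⟨φ, rfl⟩
    exact ⟨φ ∘L rotationGenerator i, (linDeriv_clm φ).symm⟩

lemma sup (hV : IsRotationModule V) (hW : IsRotationModule W) : IsRotationModule (V ⊔ W) where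
  fg := hV.fg.sup hW.fg
  le_polyAlgebra := sup_le hV.le_polyAlgebra hW.le_polyAlgebra
  linDeriv_mem i _ hf := by
    obtain ⟨v, hv, w, hw, rfl⟩ := Submodule.mem_sup.1 hf
    rw [show linDeriv _ (v + w) = linDeriv _ v + linDeriv _ w from funext fun y ↦
      linDeriv_add (differentiableAt_of_mem_polyAlgebra (hV.le_polyAlgebra hv) y)
        (differentiableAt_of_mem_polyAlgebra (hW.le_polyAlgebra hw) y)]
    exact Submodule.add_mem_sup (hV.linDeriv_mem i v hv) (hW.linDeriv_mem i w hw)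

lemma mul (hV : IsRotationModule V) (hW : IsRotationModule W) : IsRotationModule (V * W) where
  fg := hV.fg.mul hW.fg
  le_polyAlgebra := Submodule.mul_le.2 fun _ hv _ hw ↦
    polyAlgebra.mul_mem (hV.le_polyAlgebra hv) (hW.le_polyAlgebra hw)
  linDeriv_mem i f hf := by
    suffices f ∈ polyAlgebra ∧ linDeriv (rotationGenerator i) f ∈ V * W from this.2
    refine Submodule.mul_induction_on hf (fun v hv w hw ↦ ?_) fun f g hf hg ↦ ?_
    · have hv' := hV.le_polyAlgebra hv
      have hw' := hW.le_polyAlgebra hw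
      refine ⟨polyAlgebra.mul_mem hv' hw', ?_⟩
      rw [show linDeriv _ (v * w) = v * linDeriv _ w + linDeriv _ v * w from funext fun y ↦
        linDeriv_mul (differentiableAt_of_mem_polyAlgebra hv' y)
          (differentiableAt_of_mem_polyAlgebra hw' y)]
      exact Submodule.add_mem _ (Submodule.mul_mem_mul hv (hW.linDeriv_mem i w hw))
        (Submodule.mul_mem_mul (hV.linDeriv_mem i v hv) hw)
    · refine ⟨polyAlgebra.add_mem hf.1 hg.1, ?_⟩
      rw [show linDeriv _ (f + g) = linDeriv _ f + linDeriv _ g from funext fun y ↦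
        linDeriv_add (differentiableAt_of_mem_polyAlgebra hf.1 y)
          (differentiableAt_of_mem_polyAlgebra hg.1 y)]
      exact Submodule.add_mem _ hf.2 hg.2

lemma angularLaplacian_mem (hW : IsRotationModule W) (hf : f ∈ W) : angularLaplacian f ∈ W :=
  Submodule.sum_mem _ fun i _ ↦ hW.linDeriv_mem i _ (hW.linDeriv_mem i _ hf)

end IsRotationModule

lemma exists_isRotationModule_mem (hf : f ∈ polyAlgebra) : ∃ W, IsRotationModule W ∧ f ∈ W := by
  induction hf using Algebra.adjoin_induction with
  | mem _ hx =>
    obtain ⟨φ, rfl⟩ := hx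
    exact ⟨_, .linearFunctionals, φ, rfl⟩
  | algebraMap r => exact ⟨_, .constants, Submodule.mem_span_singleton.2 ⟨r, by ext; simp⟩⟩
  | add f g _ _ hf hg =>
    obtain ⟨V, hV, hfV⟩ := hf
    obtain ⟨W, hW, hgW⟩ := hg
    exact ⟨_, hV.sup hW, Submodule.add_mem_sup hfV hgW⟩
  | mul f g _ _ hf hg =>
    obtain ⟨V, hV, hfV⟩ := hf
    obtain ⟨W, hW, hgW⟩ := hg
    exact ⟨_, hV.mul hW, Submodule.mul_mem_mul hfV hgW⟩

lemma angularLaplacian_mem_polyAlgebra (hf : f ∈ polyAlgebra) :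
    angularLaplacian f ∈ polyAlgebra := by
  obtain ⟨W, hW, hfW⟩ := exists_isRotationModule_mem hf
  exact hW.le_polyAlgebra (hW.angularLaplacian_mem hfW)

lemma exists_mem_polyAlgebra_smul_sub_angularLaplacian_eq (hc : 0 < c) (hh : h ∈ polyAlgebra) :
    ∃ f ∈ polyAlgebra, c • f - angularLaplacian f = h := by
  obtain ⟨W, hW, hhW⟩ := exists_isRotationModule_mem hh
  have hsmooth {f : E3 → ℝ} (hf : f ∈ W) (y : E3) : ContDiffAt ℝ 2 f y :=
    (contDiff_of_mem_polyAlgebra (hW.le_polyAlgebra hf)).contDiffAt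
  let L : W →ₗ[ℝ] W :=
    { toFun f := ⟨angularLaplacian f, hW.angularLaplacian_mem f.2⟩
      map_add' f g := Subtype.ext <| funext fun y ↦
        angularLaplacian_add (hsmooth f.2 y) (hsmooth g.2 y)
      map_smul' a f := Subtype.ext <| angularLaplacian_const_smul a f }
  have : Module.Finite ℝ W := Module.Finite.iff_fg.2 hW.fg
  have hinj : Function.Injective (c • (LinearMap.id : W →ₗ[ℝ] W) - L) := by
    rw [← LinearMap.ker_eq_bot, LinearMap.ker_eq_bot']
    intro f hf
    ext y
    have hf' (p : E3) : c * f.1 p - angularLaplacian f p = 0 :=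
      congrFun (congrArg Subtype.val hf) p
    have h := mul_abs_le_of_abs_mul_sub_angularLaplacian_le (norm_nonneg y) hc.le
      (fun p _ ↦ hsmooth f.2 p) (fun p _ ↦ (abs_eq_zero.2 (hf' p)).le) y (by simp)
    exact abs_nonpos_iff.1 (nonpos_of_mul_nonpos_right h hc)
  obtain ⟨f, hf⟩ := LinearMap.injective_iff_surjective.1 hinj ⟨h, hhW⟩
  exact ⟨f, hW.le_polyAlgebra f.2, congrArg Subtype.val hf⟩

lemma exists_mem_polyAlgebra_near (hh : ContinuousOn h 𝕊²) (hε : 0 < ε) :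
    ∃ f ∈ polyAlgebra, ∀ p ∈ 𝕊², |f p - h p| < ε := by
  let A : Subalgebra ℝ C(𝕊², ℝ) :=
    { carrier := {g | ∃ f ∈ polyAlgebra, ∀ p, g p = f p}
      algebraMap_mem' r := ⟨_, polyAlgebra.algebraMap_mem r, fun _ ↦ rfl⟩
      add_mem' := by
        rintro _ _ ⟨f, hf, hf'⟩ ⟨g, hg, hg'⟩
        exact ⟨_, polyAlgebra.add_mem hf hg, fun p ↦ congrArg₂ _ (hf' p) (hg' p)⟩
      mul_mem' := by
        rintro _ _ ⟨f, hf, hf'⟩ ⟨g, hg, hg'⟩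
        exact ⟨_, polyAlgebra.mul_mem hf hg, fun p ↦ congrArg₂ _ (hf' p) (hg' p)⟩ }
  have hA : A.SeparatesPoints := by
    intro p q hpq
    obtain ⟨φ, hφ⟩ := SeparatingDual.exists_separating_of_ne (R := ℝ) (Subtype.coe_ne_coe.2 hpq)
    exact ⟨_, ⟨⟨_, φ.continuous.comp continuous_subtype_val⟩,
      ⟨φ, clm_mem_polyAlgebra φ, fun _ ↦ rfl⟩, rfl⟩, hφ⟩
  let h' : C(𝕊², ℝ) := ⟨fun p ↦ h p, hh.domRestrict⟩
  obtain ⟨⟨g, f, hf, hfg⟩, hg⟩ :=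
    ContinuousMap.exists_mem_subalgebra_near_continuousMap_of_separatesPoints A hA h' ε hε
  refine ⟨f, hf, fun p hp ↦ ?_⟩
  rw [← hfg ⟨p, hp⟩]
  exact (ContinuousMap.norm_coe_le_norm (g - h') ⟨p, hp⟩).trans_lt hg

end

/-! ### Functions on the sphere and their radial extensions -/

/-- The extension of a function on the sphere to `ℝ³ ∖ {0}` that is homogeneous of degree zero. -/
def radialExtension (u : E3 → ℝ) (y : E3) : ℝ := u (‖y‖⁻¹ • y)

/-- `C^n` regularity of a function on the sphere, expressed through its radial extension. -/
def ContDiffOnSphere (n : WithTop ℕ∞) (u : E3 → ℝ) : Prop :=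
  ContDiffOn ℝ n (radialExtension u) {x | x ≠ 0}

/-- The covector `‖y‖⁻² ⟪eᵢ × y, ·⟫`. Together these express a covector that vanishes on the radial
direction through its values on the infinitesimal rotations, see `eq_sum_angularCovector`. -/
def angularCovector (i : Fin 3) (y : E3) : E3 →L[ℝ] ℝ :=
  (‖y‖ ^ 2)⁻¹ • innerSL ℝ (rotationGenerator i y)

section

variable {u f g : E3 → ℝ} {n : WithTop ℕ∞} {i : Fin 3} {p y : E3}

lemma ne_zero_of_mem_sphere_one (hp : p ∈ 𝕊²) : p ≠ 0 := ne_zero_of_mem_unit_sphere ⟨p, hp⟩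

lemma normalize_mem_sphere (hy : y ≠ 0) : ‖y‖⁻¹ • y ∈ 𝕊² := by
  simp [norm_smul, inv_mul_cancel₀ (norm_ne_zero_iff.2 hy)]

lemma map_mem_sphere (R : E3 ≃ₗᵢ[ℝ] E3) (hp : p ∈ 𝕊²) : R p ∈ 𝕊² := by
  simpa using hp

lemma radialExtension_of_mem_sphere (u : E3 → ℝ) (hp : p ∈ 𝕊²) : radialExtension u p = u p := by
  simp [radialExtension, mem_sphere_zero_iff_norm.1 hp]

lemma radialExtension_smul (u : E3 → ℝ) {a : ℝ} (ha : 0 < a) (y : E3) :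
    radialExtension u (a • y) = radialExtension u y := by
  simp only [radialExtension, norm_smul, Real.norm_of_nonneg ha.le, smul_smul]
  congr 2
  field_simp

lemma contDiffAt_normalize (hy : y ≠ 0) : ContDiffAt ℝ n (fun y : E3 ↦ ‖y‖⁻¹ • y) y :=
  ((contDiffAt_norm ℝ hy).inv (norm_ne_zero_iff.2 hy)).smul contDiffAt_id

lemma ContDiffOnSphere.contDiffAt (hu : ContDiffOnSphere n u) (hy : y ≠ 0) :
    ContDiffAt ℝ n (radialExtension u) y :=
  ContDiffOn.contDiffAt hu (isOpen_ne.mem_nhds hy)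

lemma ContDiffOnSphere.continuousOn (hu : ContDiffOnSphere n u) : ContinuousOn u 𝕊² :=
  (ContDiffOn.continuousOn hu).mono (fun _ ↦ ne_zero_of_mem_sphere_one) |>.congr
    fun _ hp ↦ (radialExtension_of_mem_sphere u hp).symm

lemma contDiffOnSphere_of_contDiff (hf : ContDiff ℝ n f) : ContDiffOnSphere n f := fun _ hy ↦
  (ContDiffAt.comp _ hf.contDiffAt (contDiffAt_normalize hy)).contDiffWithinAt

lemma fderiv_radialExtension_self (u : E3 → ℝ) (y : E3) : fderiv ℝ (radialExtension u) y y = 0 := by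
  by_cases hu : DifferentiableAt ℝ (radialExtension u) y
  · have hline : HasDerivAt (fun a : ℝ ↦ a • y) y 1 := by
      simpa using (hasDerivAt_id (1 : ℝ)).smul_const y
    have h : HasDerivAt (fun a : ℝ ↦ radialExtension u (a • y))
        (fderiv ℝ (radialExtension u) y y) 1 :=
      HasFDerivAt.comp_hasDerivAt (l := radialExtension u) (f := fun a : ℝ ↦ a • y) 1
        (by simpa using hu.hasFDerivAt) hline
    have hconst : (fun a : ℝ ↦ radialExtension u (a • y)) =ᶠ[𝓝 1] fun _ ↦ radialExtension u y := by
      filter_upwards [lt_mem_nhds one_pos] with a ha using radialExtension_smul u ha y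
    rw [← h.deriv, hconst.deriv_eq, deriv_const]
  · simp [fderiv_zero_of_not_differentiableAt hu]

lemma radialExtension_linDeriv (B : E3 →L[ℝ] E3) (u : E3 → ℝ) (hy : y ≠ 0) :
    radialExtension (linDeriv B (radialExtension u)) y = linDeriv B (radialExtension u) y := by
  have ha : 0 < ‖y‖⁻¹ := inv_pos.2 (norm_pos_iff.2 hy)
  have h := fderiv_comp_smul (𝕜 := ℝ) (f := radialExtension u) (x := y) ‖y‖⁻¹
  rw [show (radialExtension u <| ‖y‖⁻¹ • ·) = radialExtension u from
    funext (radialExtension_smul u ha)] at h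
  rw [radialExtension, linDeriv, linDeriv, h, map_smul, map_smul, smul_apply]

lemma eq_sum_angularCovector (φ : E3 →L[ℝ] ℝ) (hy : y ≠ 0) (hφ : φ y = 0) :
    φ = ∑ i, φ (rotationGenerator i y) • angularCovector i y := by
  ext v
  have hlagrange := sum_rotationGenerator_rotationGenerator
    ((φ : E3 →ₗ[ℝ] ℝ).smulRight (innerₗ E3 v)) y
  have hv : ∑ i, φ (EuclideanSpace.single i 1) * v i = φ v := by
    conv_rhs => rw [← (EuclideanSpace.basisFun (Fin 3) ℝ).sum_repr v, map_sum]
    simp [mul_comm]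
  simp only [LinearMap.smulRight_apply, ContinuousLinearMap.coe_coe, LinearMap.smul_apply,
    innerₗ_apply_apply, smul_eq_mul, EuclideanSpace.inner_single_right, one_mul, conj_trivial, hv,
    hφ, zero_mul, sub_zero] at hlagrange
  simp only [angularCovector, sum_apply, smul_apply, smul_eq_mul, innerSL_apply_apply,
    real_inner_comm v, mul_left_comm _ (‖y‖ ^ 2)⁻¹, ← Finset.mul_sum, hlagrange]
  rw [inv_mul_cancel_left₀ (by simpa using hy)]

lemma hasFDerivAt_radialExtension (hy : y ≠ 0) (hu : DifferentiableAt ℝ (radialExtension u) y) :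
    HasFDerivAt (radialExtension u)
      (∑ i, linDeriv (rotationGenerator i) (radialExtension u) y • angularCovector i y) y := by
  have h := hu.hasFDerivAt
  rwa [eq_sum_angularCovector _ hy (fderiv_radialExtension_self u y)] at h

lemma contDiffAt_angularCovector (hy : y ≠ 0) : ContDiffAt ℝ n (angularCovector i) y :=
  (((contDiffAt_norm ℝ hy).pow 2).inv (pow_ne_zero _ (norm_ne_zero_iff.2 hy))).smul
    ((innerSL ℝ).contDiff.comp (rotationGenerator i).contDiff).contDiffAt

lemma linDeriv_eq_of_eqOn_sphere (hp : p ∈ 𝕊²) (hf : DifferentiableAt ℝ f p)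
    (hg : DifferentiableAt ℝ g p) (hfg : EqOn f g 𝕊²) :
    linDeriv (rotationGenerator i) f p = linDeriv (rotationGenerator i) g p := by
  have hf' := hasDerivAt_comp_axisRotation (f := f) (i := i) (y := p) (t := 0) (by simpa)
  have hg' := hasDerivAt_comp_axisRotation (f := g) (i := i) (y := p) (t := 0) (by simpa)
  simp only [axisRotation_zero_apply] at hf' hg'
  refine hf'.unique (hg'.congr_of_eventuallyEq (.of_forall fun t ↦ ?_))
  exact hfg (map_mem_sphere _ hp)

lemma sphLap_eq_angularLaplacian (hu : ContDiffOnSphere 2 u) (hp : p ∈ 𝕊²) :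
    sphLap u p = angularLaplacian (radialExtension u) p := by
  have hc := hu.contDiffAt (ne_zero_of_mem_sphere_one hp)
  have hlap : sphLap u p = lap (radialExtension u) p := rfl
  have hradial : iteratedFDeriv ℝ 2 (radialExtension u) p ![p, p] = 0 := by
    have h := linDeriv_linDeriv (B := ContinuousLinearMap.id ℝ E3) hc
    have h0 : linDeriv (ContinuousLinearMap.id ℝ E3) (radialExtension u) = fun _ ↦ 0 :=
      funext (fderiv_radialExtension_self u)
    rw [h0, linDeriv_const] at h
    simpa [fderiv_radialExtension_self] using h.symm
  rw [angularLaplacian_eq hc, hradial, fderiv_radialExtension_self, hlap,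
    mem_sphere_zero_iff_norm.1 hp]
  ring

lemma contDiffOnSphere_succ_iff {k : ℕ} : ContDiffOnSphere (k + 1) u ↔
    DifferentiableOn ℝ (radialExtension u) {x | x ≠ 0} ∧
      ∀ i, ContDiffOnSphere k (linDeriv (rotationGenerator i) (radialExtension u)) := by
  refine ⟨fun hu ↦ ⟨ContDiffOn.differentiableOn hu (by simp), fun i y hy ↦ ?_⟩, fun ⟨hd, hu⟩ ↦ ?_⟩
  · exact (contDiffAt_linDeriv (hu.contDiffAt hy) le_rfl).contDiffWithinAt.congr
      (fun z hz ↦ radialExtension_linDeriv _ u hz) (radialExtension_linDeriv _ u hy)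
  · have hd' {y : E3} (hy : y ≠ 0) : DifferentiableAt ℝ (radialExtension u) y :=
      (hd y hy).differentiableAt (isOpen_ne.mem_nhds hy)
    refine (contDiffOn_succ_iff_fderiv_of_isOpen isOpen_ne).2 ⟨hd, by simp, ?_⟩
    have hsum : ContDiffOn ℝ k (fun y ↦ ∑ i,
        radialExtension (linDeriv (rotationGenerator i) (radialExtension u)) y •
          angularCovector i y) {x : E3 | x ≠ 0} :=
      ContDiffOn.sum fun i _ ↦ ContDiffOn.smul (hu i) fun y hy ↦
        (contDiffAt_angularCovector hy).contDiffWithinAt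
    refine hsum.congr fun y hy ↦ ?_
    rw [(hasFDerivAt_radialExtension hy (hd' hy)).fderiv]
    exact Finset.sum_congr rfl fun i _ ↦ by rw [radialExtension_linDeriv _ u hy]

end

/-! ### The closure of the spherical Laplacian in the uniform norm -/

/-- `u` lies in the domain of the closure, in the uniform norm on the sphere, of the Laplacian on
polynomials, and `g` is its image under this closure. Only the values on the sphere matter. -/
def HasSphericalLaplacian (u g : E3 → ℝ) : Prop :=
  ∃ F : ℕ → E3 → ℝ, (∀ n, F n ∈ polyAlgebra) ∧ TendstoUniformlyOn F u atTop 𝕊² ∧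
    TendstoUniformlyOn (fun n ↦ angularLaplacian (F n)) g atTop 𝕊²

lemma uniformCauchySeqOn_of_abs_sub_le {α : Type*} {F G : ℕ → α → ℝ} {s : Set α} {K : ℝ}
    (hK : 0 < K)
    (h : ∀ m n, ∀ M > 0, (∀ x ∈ s, |F m x - F n x| ≤ M) → ∀ x ∈ s, |G m x - G n x| ≤ K * M)
    (hF : UniformCauchySeqOn F atTop s) : UniformCauchySeqOn G atTop s := by
  rw [Metric.uniformCauchySeqOn_iff] at hF ⊢
  intro ε hε
  obtain ⟨N, hN⟩ := hF (ε / (2 * K)) (by positivity)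
  refine ⟨N, fun m hm n hn x hx ↦ ?_⟩
  calc dist (G m x) (G n x) ≤ K * (ε / (2 * K)) :=
        h m n _ (by positivity) (fun y hy ↦ (hN m hm n hn y hy).le) x hx
    _ = ε / 2 := by field_simp
    _ < ε := half_lt_self hε

lemma exists_tendstoUniformlyOn {α : Type*} {F : ℕ → α → ℝ} {s : Set α}
    (hF : UniformCauchySeqOn F atTop s) : ∃ f, TendstoUniformlyOn F f atTop s := by
  have hlim (x : α) (hx : x ∈ s) : ∃ l, Tendsto (F · x) atTop (𝓝 l) :=
    cauchySeq_tendsto_of_complete (hF.cauchySeq hx)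
  choose! f hf using hlim
  exact ⟨f, hF.tendstoUniformlyOn_of_tendsto hf⟩

lemma exists_polyAlgebra_tendstoUniformlyOn {h : E3 → ℝ} (hh : ContinuousOn h 𝕊²) :
    ∃ G : ℕ → E3 → ℝ, (∀ n, G n ∈ polyAlgebra) ∧ TendstoUniformlyOn G h atTop 𝕊² := by
  choose G hG hGh using fun n : ℕ ↦ exists_mem_polyAlgebra_near hh (Nat.one_div_pos_of_nat (n := n))
  refine ⟨G, hG, Metric.tendstoUniformlyOn_iff.2 fun ε hε ↦ ?_⟩
  filter_upwards [tendsto_one_div_add_atTop_nhds_zero_nat.eventually_lt_const hε] with n hn p hp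
  rw [dist_comm]
  exact (hGh n p hp).trans hn

/-- The function on the sphere is the limit of the solutions for polynomial right-hand sides
converging to `h`, which form a uniform Cauchy sequence by the maximum principle. -/
lemma exists_hasSphericalLaplacian {c : ℝ} (hc : 0 < c) {h : E3 → ℝ} (hh : ContinuousOn h 𝕊²) :
    ∃ u, HasSphericalLaplacian u (c • u - h) := by
  obtain ⟨G, hG, hGh⟩ := exists_polyAlgebra_tendstoUniformlyOn hh
  choose F hF hFG using fun n ↦ exists_mem_polyAlgebra_smul_sub_angularLaplacian_eq hc (hG n)
  have hcauchy : UniformCauchySeqOn F atTop 𝕊² := by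
    refine uniformCauchySeqOn_of_abs_sub_le (inv_pos.2 hc) (fun m n M _ hM p hp ↦ ?_)
      hGh.uniformCauchySeqOn
    rw [le_inv_mul_iff₀ hc]
    refine mul_abs_le_of_abs_mul_sub_angularLaplacian_le (f := F m - F n) zero_le_one hc.le
      (fun q _ ↦ (contDiff_of_mem_polyAlgebra (polyAlgebra.sub_mem (hF m) (hF n))).contDiffAt)
      (fun q hq ↦ ?_) p hp
    have hL : angularLaplacian (F m - F n) q = _ :=
      angularLaplacian_sub (contDiff_of_mem_polyAlgebra (hF m)).contDiffAt
        (contDiff_of_mem_polyAlgebra (hF n)).contDiffAt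
    have hm := congrFun (hFG m) q
    have hn := congrFun (hFG n) q
    simp only [Pi.sub_apply, Pi.smul_apply, smul_eq_mul] at hm hn ⊢
    rw [hL]
    convert hM q hq using 2
    linarith
  obtain ⟨u, hu⟩ := exists_tendstoUniformlyOn hcauchy
  refine ⟨u, F, hF, hu, ?_⟩
  have hL (n : ℕ) : angularLaplacian (F n) = c • F n - G n := by
    rw [← hFG n, sub_sub_cancel]
  simp only [hL]
  exact ((uniformContinuous_const_smul c).comp_tendstoUniformlyOn hu).sub hGh

lemma angularLaplacian_inner (p y : E3) : angularLaplacian (fun z ↦ ⟪p, z⟫) y = -2 * ⟪p, y⟫ := by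
  simpa [mul_comm] using angularLaplacian_inner_quadratic 1 0 p y

namespace HasSphericalLaplacian

variable {u u' g g' φ : E3 → ℝ} {c M : ℝ} {p : E3}

lemma congr (hu : HasSphericalLaplacian u g) (huu' : EqOn u u' 𝕊²) (hgg' : EqOn g g' 𝕊²) :
    HasSphericalLaplacian u' g' := by
  obtain ⟨F, hF, hFu, hFg⟩ := hu
  exact ⟨F, hF, hFu.congr_right huu', hFg.congr_right hgg'⟩

lemma const_smul (a : ℝ) (hu : HasSphericalLaplacian u g) :
    HasSphericalLaplacian (a • u) (a • g) := by
  obtain ⟨F, hF, hFu, hFg⟩ := hu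
  have hsmul := uniformContinuous_const_smul (X := ℝ) a
  refine ⟨fun n ↦ a • F n, fun n ↦ polyAlgebra.smul_mem (hF n) a,
    hsmul.comp_tendstoUniformlyOn hFu, ?_⟩
  simp only [angularLaplacian_const_smul]
  exact hsmul.comp_tendstoUniformlyOn hFg

lemma sub (hu : HasSphericalLaplacian u g) (hu' : HasSphericalLaplacian u' g') :
    HasSphericalLaplacian (u - u') (g - g') := by
  obtain ⟨F, hF, hFu, hFg⟩ := hu
  obtain ⟨F', hF', hFu', hFg'⟩ := hu'
  refine ⟨fun n ↦ F n - F' n, fun n ↦ polyAlgebra.sub_mem (hF n) (hF' n), hFu.sub hFu', ?_⟩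
  refine (hFg.sub hFg').congr (.of_forall fun n p _ ↦ ?_)
  exact (angularLaplacian_sub (contDiff_of_mem_polyAlgebra (hF n)).contDiffAt
    (contDiff_of_mem_polyAlgebra (hF' n)).contDiffAt).symm

lemma comp_isometry (R : E3 ≃ₗᵢ[ℝ] E3) (hu : HasSphericalLaplacian u g) :
    HasSphericalLaplacian (u ∘ R) (g ∘ R) := by
  obtain ⟨F, hF, hFu, hFg⟩ := hu
  have hmaps : MapsTo R 𝕊² 𝕊² := fun _ ↦ map_mem_sphere R
  refine ⟨fun n ↦ F n ∘ R, fun n ↦ comp_mem_polyAlgebra (R : E3 →L[ℝ] E3) (hF n),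
    (hFu.comp R).mono hmaps, ((hFg.comp R).mono hmaps).congr (.of_forall fun n p _ ↦ ?_)⟩
  exact (angularLaplacian_comp_isometry R (contDiff_of_mem_polyAlgebra (hF n)).contDiffAt).symm

lemma continuousOn (hu : HasSphericalLaplacian u g) : ContinuousOn u 𝕊² := by
  obtain ⟨F, hF, hFu, -⟩ := hu
  exact hFu.continuousOn (.of_forall fun n ↦
    (contDiff_of_mem_polyAlgebra (n := 0) (hF n)).continuous.continuousOn)

lemma continuousOn_right (hu : HasSphericalLaplacian u g) : ContinuousOn g 𝕊² := by
  obtain ⟨F, hF, -, hFg⟩ := hu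
  exact hFg.continuousOn (.of_forall fun n ↦ (contDiff_of_mem_polyAlgebra (n := 0)
    (angularLaplacian_mem_polyAlgebra (hF n))).continuous.continuousOn)

/-- The classical maximum principle is applied to an approximant of `u - φ`, penalized by
`ε ⟪p, ·⟫` so that its maximum points are close to `p`. -/
lemma exists_near_of_isMaxOn_sub (hu : HasSphericalLaplacian u g)
    (hφ : ∀ q ∈ 𝕊², ContDiffAt ℝ 2 φ q) (hp : p ∈ 𝕊²) (hmax : IsMaxOn (u - φ) 𝕊² p)
    {ε : ℝ} (hε : 0 < ε) :
    ∃ q ∈ 𝕊², ‖q - p‖ ^ 2 ≤ 4 * ε ∧ g q ≤ angularLaplacian φ q + 3 * ε := by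
  obtain ⟨F, hF, hFu, hFg⟩ := hu
  obtain ⟨n, hnu, hng⟩ := ((Metric.tendstoUniformlyOn_iff.1 hFu (ε ^ 2) (by positivity)).and
    (Metric.tendstoUniformlyOn_iff.1 hFg ε hε)).exists
  simp only [Real.dist_eq, abs_lt] at hnu hng
  have hFn (q : E3) : ContDiffAt ℝ 2 (F n) q := (contDiff_of_mem_polyAlgebra (hF n)).contDiffAt
  have hψ (q : E3) : ContDiffAt ℝ 2 (ε • fun y ↦ ⟪p, y⟫) q :=
    contDiffAt_const.smul (innerSL ℝ p).contDiff.contDiffAt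
  have hFψ (q : E3) : ContDiffAt ℝ 2 (F n + ε • fun y ↦ ⟪p, y⟫) q := (hFn q).add (hψ q)
  obtain ⟨q, hq, hqmax, hLq⟩ := exists_isMaxOn_angularLaplacian_nonpos
    (f := F n + (ε • fun y ↦ ⟪p, y⟫) - φ) zero_le_one fun q hq ↦ (hFψ q).sub (hφ q hq)
  rw [angularLaplacian_sub (hFψ q) (hφ q hq), angularLaplacian_add (hFn q) (hψ q),
    angularLaplacian_const_smul, Pi.smul_apply, angularLaplacian_inner, smul_eq_mul] at hLq
  have hp1 := mem_sphere_zero_iff_norm.1 hp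
  have hq1 := mem_sphere_zero_iff_norm.1 hq
  have hpq : ⟪p, q⟫ ≤ 1 := (inner_mem_Icc_of_mem_sphere hp hq).2
  have hq_ge := hqmax hp
  have hp_ge := hmax hq
  simp only [mem_ofPred_eq, Pi.add_apply, Pi.sub_apply, Pi.smul_apply, smul_eq_mul,
    real_inner_self_eq_norm_sq, hp1] at hq_ge hp_ge
  have hgap : ε * (1 - ⟪p, q⟫) ≤ ε * (2 * ε) := by
    linarith [(hnu p hp).2, (hnu q hq).1]
  have hgap' := le_of_mul_le_mul_left hgap hε
  refine ⟨q, hq, ?_, ?_⟩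
  · rw [norm_sub_sq_real, hp1, hq1, real_inner_comm]
    linarith
  · linarith [(hng q hq).2, mul_le_mul_of_nonneg_left hpq hε.le]

lemma le_of_isMaxOn_sub (hu : HasSphericalLaplacian u g)
    (hφ : ∀ q ∈ 𝕊², ContDiffAt ℝ 2 φ q) (hp : p ∈ 𝕊²) (hmax : IsMaxOn (u - φ) 𝕊² p) :
    g p ≤ angularLaplacian φ p := by
  choose q hq hqp hgq using fun n : ℕ ↦
    hu.exists_near_of_isMaxOn_sub hφ hp hmax Nat.one_div_pos_of_nat
  have hlim (a : ℝ) : Tendsto (fun n : ℕ ↦ a * (1 / ((n : ℝ) + 1))) atTop (𝓝 0) := by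
    simpa using tendsto_one_div_add_atTop_nhds_zero_nat.const_mul a
  have hqlim : Tendsto q atTop (𝓝[𝕊²] p) := by
    refine tendsto_nhdsWithin_iff.2 ⟨tendsto_iff_norm_sub_tendsto_zero.2 ?_, .of_forall hq⟩
    simpa using (squeeze_zero (fun _ ↦ sq_nonneg _) hqp (hlim 4)).sqrt
  refine le_of_tendsto_of_tendsto ((hu.continuousOn_right p hp).tendsto.comp hqlim) ?_
    (.of_forall hgq)
  simpa using (((continuousAt_angularLaplacian (hφ p hp)).tendsto.mono_left
    nhdsWithin_le_nhds).comp hqlim).add (hlim 3)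

lemma mul_le (hu : HasSphericalLaplacian u g) (hc : 0 ≤ c) (hM : ∀ q ∈ 𝕊², c * u q - g q ≤ M)
    (hp : p ∈ 𝕊²) : c * u p ≤ M := by
  obtain ⟨q, hq, hmax⟩ := (isCompact_sphere (0 : E3) 1).exists_isMaxOn ⟨p, hp⟩ hu.continuousOn
  have hgq : g q ≤ angularLaplacian 0 q :=
    hu.le_of_isMaxOn_sub (fun _ _ ↦ contDiffAt_const) hq (by simpa using hmax)
  have hpq : u p ≤ u q := hmax hp
  have h0 : angularLaplacian 0 q = 0 := congrFun (angularLaplacian_const 0) q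
  linarith [hM q hq, mul_le_mul_of_nonneg_left hpq hc]

lemma mul_abs_le (hu : HasSphericalLaplacian u g) (hc : 0 ≤ c)
    (hM : ∀ q ∈ 𝕊², |c * u q - g q| ≤ M) (hp : p ∈ 𝕊²) : c * |u p| ≤ M := by
  have hupper := hu.mul_le hc (fun q hq ↦ (abs_le.1 (hM q hq)).2) hp
  have hlower := (hu.const_smul (-1)).mul_le (M := M) hc (fun q hq ↦ by
    simp only [Pi.smul_apply, smul_eq_mul]
    linarith [(abs_le.1 (hM q hq)).1]) hp
  simp only [Pi.smul_apply, smul_eq_mul] at hlower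
  rcases abs_choice (u p) with h | h <;> rw [h] <;> linarith

lemma angularLaplacian_radialExtension (hu : HasSphericalLaplacian u g)
    (hu2 : ContDiffOnSphere 2 u) (hp : p ∈ 𝕊²) : angularLaplacian (radialExtension u) p = g p := by
  have hle {v g : E3 → ℝ} (hv : HasSphericalLaplacian v g) (hv2 : ContDiffOnSphere 2 v) :
      g p ≤ angularLaplacian (radialExtension v) p := by
    refine hv.le_of_isMaxOn_sub (fun q hq ↦ hv2.contDiffAt (ne_zero_of_mem_sphere_one hq)) hp ?_
    intro q hq
    simp [radialExtension_of_mem_sphere v hp, radialExtension_of_mem_sphere v hq]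
  have hneg : radialExtension ((-1 : ℝ) • u) = (-1 : ℝ) • radialExtension u := rfl
  have hlower := hle (hu.const_smul (-1)) (by
    rw [ContDiffOnSphere, hneg]
    exact contDiffOn_const.smul hu2)
  rw [hneg, angularLaplacian_const_smul] at hlower
  simp only [Pi.smul_apply, smul_eq_mul] at hlower
  linarith [hle hu hu2]

end HasSphericalLaplacian

/-! ### Regularity -/

section

variable {u : E3 → ℝ} {i : Fin 3}

lemma continuousOn_normalize : ContinuousOn (fun y : E3 ↦ ‖y‖⁻¹ • y) {x | x ≠ 0} := fun _ hy ↦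
  (contDiffAt_normalize (n := 0) hy).continuousAt.continuousWithinAt

lemma continuousOn_angularCovector : ContinuousOn (angularCovector i) {x | x ≠ 0} := fun _ hy ↦
  (contDiffAt_angularCovector (n := 0) hy).continuousAt.continuousWithinAt

lemma continuousOn_radialExtension (hu : ContinuousOn u 𝕊²) :
    ContinuousOn (radialExtension u) {x | x ≠ 0} :=
  hu.comp continuousOn_normalize fun _ ↦ normalize_mem_sphere

lemma ContDiffOnSphere.continuousOn_linDeriv (hu : ContDiffOnSphere 1 u) :
    ContinuousOn (linDeriv (rotationGenerator i) (radialExtension u)) 𝕊² := fun _ hp ↦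
  (contDiffAt_linDeriv (m := 0) (hu.contDiffAt (ne_zero_of_mem_sphere_one hp))
    (by simp)).continuousAt.continuousWithinAt

lemma tendstoLocallyUniformlyOn_sum_smul_angularCovector {g : ℕ → Fin 3 → E3 → ℝ}
    {w : Fin 3 → E3 → ℝ} (hg : ∀ i, TendstoUniformlyOn (fun n ↦ g n i) (w i) atTop 𝕊²)
    (hw : ∀ i, ContinuousOn (w i) 𝕊²) :
    TendstoLocallyUniformlyOn
      (fun n y ↦ ∑ i, radialExtension (g n i) y • angularCovector i y)
      (fun y ↦ ∑ i, radialExtension (w i) y • angularCovector i y) atTop {x | x ≠ 0} := by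
  have hsmul (i : Fin 3) : TendstoLocallyUniformlyOn
      (fun n y ↦ radialExtension (g n i) y • angularCovector i y)
      (fun y ↦ radialExtension (w i) y • angularCovector i y) atTop {x | x ≠ 0} :=
    ((hg i).tendstoLocallyUniformlyOn.comp _ (fun _ ↦ normalize_mem_sphere)
      continuousOn_normalize).fun_smul₀ (G := fun _ ↦ angularCovector i) (g := angularCovector i)
      (fun _ hs _ _ ↦ ⟨_, self_mem_nhdsWithin, .of_forall fun _ _ _ ↦ refl_mem_uniformity hs⟩)
      (continuousOn_radialExtension (hw i)) continuousOn_angularCovector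
  simp only [Fin.sum_univ_three]
  exact ((hsmul 0).fun_add (hsmul 1)).fun_add (hsmul 2)

lemma contDiffOnSphere_one_of_tendstoUniformlyOn {f : ℕ → E3 → ℝ} {w : Fin 3 → E3 → ℝ}
    (hf : ∀ n, ContDiffOnSphere 1 (f n)) (hfu : TendstoUniformlyOn f u atTop 𝕊²)
    (hw : ∀ i, TendstoUniformlyOn
      (fun n ↦ linDeriv (rotationGenerator i) (radialExtension (f n))) (w i) atTop 𝕊²) :
    ContDiffOnSphere 1 u := by
  have hwc (i : Fin 3) : ContinuousOn (w i) 𝕊² :=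
    (hw i).continuousOn (.of_forall fun n ↦ (hf n).continuousOn_linDeriv)
  set w' : E3 → E3 →L[ℝ] ℝ := fun y ↦ ∑ i, radialExtension (w i) y • angularCovector i y
  have hderiv {y : E3} (hy : y ≠ 0) : HasFDerivAt (radialExtension u) (w' y) y := by
    refine hasFDerivAt_of_tendstoLocallyUniformlyOn (f := fun n ↦ radialExtension (f n)) isOpen_ne
      ((tendstoLocallyUniformlyOn_sum_smul_angularCovector hw hwc).congr fun n z hz ↦ ?_)
      (fun n z hz ↦ hasFDerivAt_radialExtension hz
        (((hf n).contDiffAt hz).differentiableAt one_ne_zero))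
      (fun z hz ↦ hfu.tendsto_at (normalize_mem_sphere hz)) hy
    simp only [radialExtension_linDeriv _ _ hz]
  refine (contDiffOn_succ_iff_fderiv_of_isOpen (n := 0) isOpen_ne).2
    ⟨fun y hy ↦ (hderiv hy).differentiableAt.differentiableWithinAt, by simp, ?_⟩
  refine contDiffOn_zero.2 (ContinuousOn.congr (f := w') ?_ fun y hy ↦ (hderiv hy).fderiv)
  exact continuousOn_finsetSum _ fun i _ ↦
    (continuousOn_radialExtension (hwc i)).smul continuousOn_angularCovector

lemma ContDiffOnSphere.tendstoUniformlyOn_slope (hu : ContDiffOnSphere 1 u) :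
    TendstoUniformlyOn (fun t : ℝ ↦ t⁻¹ • (u ∘ axisRotation i t - u))
      (linDeriv (rotationGenerator i) (radialExtension u)) (𝓝[≠] 0) 𝕊² := by
  set u' := linDeriv (rotationGenerator i) (radialExtension u)
  have hunif := (isCompact_sphere (0 : E3) 1).uniformContinuousOn_of_continuous
    (hu.continuousOn_linDeriv (i := i))
  rw [Metric.uniformContinuousOn_iff_le] at hunif
  refine Metric.tendstoUniformlyOn_iff.2 fun ε hε ↦ ?_
  obtain ⟨η, hη, hclose⟩ := hunif (ε / 2) (half_pos hε)
  filter_upwards [self_mem_nhdsWithin, nhdsWithin_le_nhds (closedBall_mem_nhds (0 : ℝ) hη)]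
    with t ht0 htη p hp
  have hderiv (s : ℝ) : HasDerivAt (fun s ↦ radialExtension u (axisRotation i s p) - s * u' p)
      (u' (axisRotation i s p) - 1 * u' p) s :=
    (hasDerivAt_comp_axisRotation ((hu.contDiffAt (ne_zero_of_mem_sphere_one
      (map_mem_sphere _ hp))).differentiableAt one_ne_zero)).sub
      ((hasDerivAt_id s).mul_const (u' p))
  have hderiv_le (s : ℝ) (hs : s ∈ closedBall (0 : ℝ) η) :
      ‖u' (axisRotation i s p) - 1 * u' p‖ ≤ ε / 2 := by
    have hdist := norm_axisRotation_sub_le i s p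
    rw [mem_sphere_zero_iff_norm.1 hp, one_mul] at hdist
    rw [one_mul, ← dist_eq_norm]
    refine hclose _ (map_mem_sphere _ hp) _ hp ((dist_eq_norm _ _).trans_le (hdist.trans ?_))
    simpa using hs
  have hmv := (convex_closedBall (0 : ℝ) η).norm_image_sub_le_of_norm_hasDerivWithin_le
    (fun s _ ↦ (hderiv s).hasDerivWithinAt) hderiv_le (mem_closedBall_self hη.le) htη
  simp only [axisRotation_zero_apply, radialExtension_of_mem_sphere u hp,
    radialExtension_of_mem_sphere u (map_mem_sphere _ hp), zero_mul, sub_zero] at hmv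
  have ht : 0 < ‖t‖ := norm_pos_iff.2 ht0
  calc dist (u' p) (t⁻¹ * (u (axisRotation i t p) - u p))
      = ‖t‖⁻¹ * ‖u (axisRotation i t p) - t * u' p - u p‖ := by
        rw [dist_comm, dist_eq_norm, ← norm_inv, ← norm_mul]
        congr 1
        field_simp [norm_pos_iff.1 ht]
        ring
    _ ≤ ‖t‖⁻¹ * (ε / 2 * ‖t‖) := by gcongr
    _ = ε / 2 := by field_simp
    _ < ε := half_lt_self hε

end

namespace HasSphericalLaplacian

variable {u g : E3 → ℝ}

lemma of_tendstoUniformlyOn {ι : Type*} {l : Filter ι} [l.NeBot] {U G : ι → E3 → ℝ}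
    (h : ∀ t, HasSphericalLaplacian (U t) (G t)) (hU : TendstoUniformlyOn U u l 𝕊²)
    (hG : TendstoUniformlyOn G g l 𝕊²) : HasSphericalLaplacian u g := by
  have happrox (n : ℕ) : ∃ f ∈ polyAlgebra, ∀ p ∈ 𝕊²,
      dist (u p) (f p) < 1 / (n + 1) ∧ dist (g p) (angularLaplacian f p) < 1 / (n + 1) := by
    have hε : 0 < 1 / ((n : ℝ) + 1) / 2 := half_pos Nat.one_div_pos_of_nat
    obtain ⟨t, hUt, hGt⟩ := ((Metric.tendstoUniformlyOn_iff.1 hU _ hε).and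
      (Metric.tendstoUniformlyOn_iff.1 hG _ hε)).exists
    obtain ⟨F, hF, hFU, hFG⟩ := h t
    obtain ⟨m, hmU, hmG⟩ := ((Metric.tendstoUniformlyOn_iff.1 hFU _ hε).and
      (Metric.tendstoUniformlyOn_iff.1 hFG _ hε)).exists
    exact ⟨F m, hF m, fun p hp ↦
      ⟨(dist_triangle _ (U t p) _).trans_lt ((add_lt_add (hUt p hp) (hmU p hp)).trans_eq
        (add_halves _)),
      (dist_triangle _ (G t p) _).trans_lt ((add_lt_add (hGt p hp) (hmG p hp)).trans_eq
        (add_halves _))⟩⟩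
  choose f hf hfu using happrox
  refine ⟨f, hf, Metric.tendstoUniformlyOn_iff.2 fun ε hε ↦ ?_,
    Metric.tendstoUniformlyOn_iff.2 fun ε hε ↦ ?_⟩ <;>
  filter_upwards [tendsto_one_div_add_atTop_nhds_zero_nat.eventually_lt_const hε] with n hn p hp
  exacts [(hfu n p hp).1.trans hn, (hfu n p hp).2.trans hn]

lemma contDiffOnSphere_one (hu : HasSphericalLaplacian u g) : ContDiffOnSphere 1 u := by
  obtain ⟨F, hF, hFu, hFg⟩ := hu
  have hFc (n : ℕ) {k : WithTop ℕ∞} : ContDiff ℝ k (F n) := contDiff_of_mem_polyAlgebra (hF n)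
  have hcauchy (i : Fin 3) :
      UniformCauchySeqOn (fun n ↦ linDeriv (rotationGenerator i) (F n)) atTop 𝕊² := by
    refine uniformCauchySeqOn_of_abs_sub_le two_pos (fun m n M hM hL p hp ↦ ?_)
      hFg.uniformCauchySeqOn
    have hsub : linDeriv (rotationGenerator i) (F m - F n) p =
        linDeriv (rotationGenerator i) (F m) p - linDeriv (rotationGenerator i) (F n) p := by
      simp [linDeriv, fderiv_sub (differentiableAt_of_mem_polyAlgebra (hF m) p)
        (differentiableAt_of_mem_polyAlgebra (hF n) p)]
    rw [← hsub]
    refine abs_linDeriv_rotationGenerator_le hM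
      (fun q _ ↦ (contDiff_of_mem_polyAlgebra (polyAlgebra.sub_mem (hF m) (hF n))).contDiffAt)
      (fun q hq ↦ ?_) i p hp
    rw [angularLaplacian_sub (hFc m).contDiffAt (hFc n).contDiffAt]
    exact hL q hq
  choose w hw using fun i ↦ exists_tendstoUniformlyOn (hcauchy i)
  refine contDiffOnSphere_one_of_tendstoUniformlyOn (w := w)
    (fun n ↦ contDiffOnSphere_of_contDiff (hFc n)) hFu fun i ↦
      (hw i).congr (.of_forall fun n p hp ↦ ?_)
  exact (linDeriv_eq_of_eqOn_sphere hp (((contDiffOnSphere_of_contDiff (hFc n)).contDiffAt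
    (ne_zero_of_mem_sphere_one hp)).differentiableAt one_ne_zero)
    (differentiableAt_of_mem_polyAlgebra (hF n) p)
    fun q hq ↦ radialExtension_of_mem_sphere _ hq).symm

lemma linDeriv_rotationGenerator (hu : HasSphericalLaplacian u g) (hg : ContDiffOnSphere 1 g)
    (i : Fin 3) : HasSphericalLaplacian (linDeriv (rotationGenerator i) (radialExtension u))
      (linDeriv (rotationGenerator i) (radialExtension g)) :=
  of_tendstoUniformlyOn (l := 𝓝[≠] (0 : ℝ))
    (fun t ↦ ((hu.comp_isometry (axisRotation i t)).sub hu).const_smul t⁻¹)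
    hu.contDiffOnSphere_one.tendstoUniformlyOn_slope hg.tendstoUniformlyOn_slope

lemma contDiffOnSphere_succ (k : ℕ) (hu : HasSphericalLaplacian u g)
    (hg : ContDiffOnSphere k g) : ContDiffOnSphere (k + 1) u := by
  induction k generalizing u g with
  | zero => simpa using hu.contDiffOnSphere_one
  | succ k ih =>
    have hg' := contDiffOnSphere_succ_iff.1 (by exact_mod_cast hg)
    refine contDiffOnSphere_succ_iff.2 ⟨ContDiffOn.differentiableOn hu.contDiffOnSphere_one
      one_ne_zero, fun i ↦ ?_⟩
    exact_mod_cast ih (hu.linDeriv_rotationGenerator (ContDiffOn.of_le hg (by simp)) i) (hg'.2 i)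

end HasSphericalLaplacian

/-! ### Semilinear equations -/

namespace HasSphericalLaplacian

variable {u g φ : E3 → ℝ}

lemma comparison_le (hu : HasSphericalLaplacian u g) (hφ : ∀ p ∈ 𝕊², ContDiffAt ℝ 2 φ p)
    (h : ∀ p ∈ 𝕊², φ p < u p → angularLaplacian φ p < g p) {p : E3} (hp : p ∈ 𝕊²) :
    u p ≤ φ p := by
  obtain ⟨q, hq, hmax⟩ := (isCompact_sphere (0 : E3) 1).exists_isMaxOn ⟨p, hp⟩
    (hu.continuousOn.sub fun q hq ↦ (hφ q hq).continuousAt.continuousWithinAt)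
  have hq_le : u q ≤ φ q := le_of_not_gt fun hlt ↦
    (h q hq hlt).not_ge (hu.le_of_isMaxOn_sub hφ hq hmax)
  have hpq : u p - φ p ≤ u q - φ q := hmax hp
  linarith

lemma le_comparison (hu : HasSphericalLaplacian u g) (hφ : ∀ p ∈ 𝕊², ContDiffAt ℝ 2 φ p)
    (h : ∀ p ∈ 𝕊², u p < φ p → g p < angularLaplacian φ p) {p : E3} (hp : p ∈ 𝕊²) :
    φ p ≤ u p := by
  have hneg := (hu.const_smul (-1)).comparison_le (φ := (-1 : ℝ) • φ)
    (fun q hq ↦ contDiffAt_const.smul (hφ q hq)) (fun q hq hlt ↦ ?_) hp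
  · simpa using hneg
  · rw [angularLaplacian_const_smul]
    simpa using h q hq (by simpa using hlt)

lemma eqOn_of_sphLap_eq {H : E3 → ℝ → ℝ} {I : Set ℝ} (hH : ∀ p ∈ 𝕊², StrictMonoOn (H p) I)
    {V W : E3 → ℝ} (hV : HasSphericalLaplacian V fun p ↦ H p (V p)) (hVI : MapsTo V 𝕊² I)
    (hW : ContDiffOnSphere 2 W) (hWI : MapsTo W 𝕊² I)
    (hWH : ∀ p ∈ 𝕊², sphLap W p = H p (W p)) : EqOn W V 𝕊² := by
  have hW_smooth (p : E3) (hp : p ∈ 𝕊²) : ContDiffAt ℝ 2 (radialExtension W) p :=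
    hW.contDiffAt (ne_zero_of_mem_sphere_one hp)
  have hL (p : E3) (hp : p ∈ 𝕊²) : angularLaplacian (radialExtension W) p = H p (W p) := by
    rw [← sphLap_eq_angularLaplacian hW hp, hWH p hp]
  intro p hp
  rw [← radialExtension_of_mem_sphere W hp]
  refine le_antisymm (hV.le_comparison hW_smooth (fun q hq hlt ↦ ?_) hp)
    (hV.comparison_le hW_smooth (fun q hq hlt ↦ ?_) hp)
  · rw [radialExtension_of_mem_sphere W hq] at hlt
    exact (hH q hq (hVI hq) (hWI hq) hlt).trans_eq (hL q hq).symm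
  · rw [radialExtension_of_mem_sphere W hq] at hlt
    exact (hL q hq).trans_lt (hH q hq (hWI hq) (hVI hq) hlt)

end HasSphericalLaplacian

lemma exists_eqOn_of_contraction {X : Type*} [TopologicalSpace X] {s : Set X} (hs : IsCompact s)
    {K : ℝ≥0} (hK : K < 1) {T : (X → ℝ) → X → ℝ}
    (hcont : ∀ u, ContinuousOn u s → ContinuousOn (T u) s)
    (hT : ∀ u v B, ContinuousOn u s → ContinuousOn v s → (∀ q ∈ s, |u q - v q| ≤ B) →
      ∀ p ∈ s, |T u p - T v p| ≤ K * B) :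
    ∃ u, ContinuousOn u s ∧ EqOn (T u) u s := by
  have : CompactSpace s := isCompact_iff_compactSpace.1 hs
  let extend (v : C(s, ℝ)) : X → ℝ := Function.extend Subtype.val v 0
  have extend_apply (v : C(s, ℝ)) (p : s) : extend v p = v p :=
    Subtype.val_injective.extend_apply _ _ p
  have hextend (v : C(s, ℝ)) : ContinuousOn (extend v) s := by
    rw [continuousOn_iff_continuous_domRestrict]
    exact v.continuous.congr fun p ↦ (extend_apply v p).symm
  let Φ (v : C(s, ℝ)) : C(s, ℝ) := ⟨_, (hcont _ (hextend v)).domRestrict⟩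
  have hΦ : LipschitzWith K Φ := by
    refine LipschitzWith.of_dist_le_mul fun v w ↦ (ContinuousMap.dist_le (by positivity)).2
      fun p ↦ hT _ _ _ (hextend v) (hextend w) (fun q hq ↦ ?_) p p.2
    rw [extend_apply v ⟨q, hq⟩, extend_apply w ⟨q, hq⟩, ← Real.dist_eq]
    exact ContinuousMap.dist_apply_le_dist _
  have hcontract : ContractingWith K Φ := ⟨hK, hΦ⟩
  refine ⟨extend (hcontract.fixedPoint Φ), hextend _, fun p hp ↦ ?_⟩
  exact (DFunLike.congr_fun hcontract.fixedPoint_isFixedPt ⟨p, hp⟩).trans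
    (extend_apply _ ⟨p, hp⟩).symm

/-- Since the maximum principle inverts `c - Δ̃` with norm at most `c⁻¹`, the solution is the fixed
point of a contraction. -/
lemma exists_hasSphericalLaplacian_of_lipschitzWith {κ : ℝ≥0} {c : ℝ} (hκ : κ < c)
    {F : E3 → ℝ → ℝ} (hF : ∀ p ∈ 𝕊², LipschitzWith κ (F p))
    (hF' : ∀ a, ContinuousOn (fun p ↦ F p a) 𝕊²) :
    ∃ u, HasSphericalLaplacian u fun p ↦ c * u p - F p (u p) := by
  have hc : 0 < c := κ.coe_nonneg.trans_lt hκ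
  have hFv (v : E3 → ℝ) (hv : ContinuousOn v 𝕊²) : ContinuousOn (fun p ↦ F p (v p)) 𝕊² :=
    (continuousOn_prod_of_continuousOn_lipschitzOnWith' (fun x : E3 × ℝ ↦ F x.1 x.2) κ
      (t := univ) (fun p hp ↦ (hF p hp).lipschitzOnWith) fun a _ ↦ hF' a).comp
      (continuousOn_id.prodMk hv) fun p hp ↦ ⟨hp, mem_univ _⟩
  choose! S hS using fun v hv ↦ exists_hasSphericalLaplacian hc (hFv v hv)
  have hS_contract (u v : E3 → ℝ) (B : ℝ) (hu : ContinuousOn u 𝕊²) (hv : ContinuousOn v 𝕊²)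
      (huv : ∀ q ∈ 𝕊², |u q - v q| ≤ B) (p : E3) (hp : p ∈ 𝕊²) :
      |S u p - S v p| ≤ (κ / c.toNNReal : ℝ≥0) * B := by
    rw [NNReal.coe_div, Real.coe_toNNReal c hc.le, div_mul_eq_mul_div, le_div_iff₀' hc]
    refine ((hS u hu).sub (hS v hv)).mul_abs_le hc.le (fun q hq ↦ ?_) hp
    calc |c * (S u q - S v q) - ((c * S u q - F q (u q)) - (c * S v q - F q (v q)))|
        = dist (F q (u q)) (F q (v q)) := by rw [Real.dist_eq]; ring_nf
      _ ≤ κ * dist (u q) (v q) := (hF q hq).dist_le_mul _ _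
      _ ≤ κ * B := by
        gcongr
        exact huv q hq
  obtain ⟨u, hu, hSu⟩ := exists_eqOn_of_contraction (isCompact_sphere (0 : E3) 1)
    ((div_lt_one (Real.toNNReal_pos.2 hc)).2 (Real.lt_toNNReal_iff_coe_lt.2 hκ))
    (fun v hv ↦ (hS v hv).continuousOn) hS_contract
  exact ⟨u, (hS u hu).congr hSu fun p hp ↦ by simp [hSu hp]⟩

lemma lipschitzWith_mul_add_of_antitone {κ : ℝ≥0} {N : ℝ → ℝ} (hN : Antitone N)
    (hNκ : ∀ a b, a ≤ b → N a - N b ≤ κ * (b - a)) : LipschitzWith κ fun a ↦ κ * a + N a := by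
  refine LipschitzWith.of_le_add_mul _ fun a b ↦ ?_
  rcases le_total a b with hab | hab
  · rw [dist_comm, Real.dist_eq, abs_of_nonneg (sub_nonneg.2 hab)]
    nlinarith [hNκ a b hab, mul_nonneg κ.coe_nonneg (sub_nonneg.2 hab)]
  · rw [Real.dist_eq, abs_of_nonneg (sub_nonneg.2 hab)]
    linarith [hN hab]

/-! ### The Lichnerowicz equation -/

/-- The right-hand side `a / (4 v⁷) + b / (4 v³)` of the angular Lichnerowicz equation at a point,
where `a` comes from the extrinsic curvature and `b` from the matter density. -/
def lichnerowiczTerm (a b v : ℝ) : ℝ := a / (4 * v ^ 7) + b / (4 * v ^ 3)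

lemma lichnerowiczTerm_anti {a b v w : ℝ} (ha : 0 ≤ a) (hb : 0 ≤ b) (hv : 0 < v) (hvw : v ≤ w) :
    lichnerowiczTerm a b w ≤ lichnerowiczTerm a b v := by
  unfold lichnerowiczTerm
  gcongr

lemma lichnerowiczTerm_one (a b : ℝ) : lichnerowiczTerm a b 1 = (a + b) / 4 := by
  unfold lichnerowiczTerm
  ring

lemma strictMonoOn_div_four_sub_lichnerowiczTerm {a b : ℝ} (ha : 0 ≤ a) (hb : 0 ≤ b) :
    StrictMonoOn (fun v ↦ v / 4 - lichnerowiczTerm a b v) (Ioi 0) := fun v hv w _ hvw ↦ by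
  linarith [lichnerowiczTerm_anti ha hb hv hvw.le]

lemma inv_pow_sub_inv_pow_le {ε a b : ℝ} (hε : 0 < ε) (ha : ε ≤ a) (hab : a ≤ b) (n : ℕ) :
    (a ^ n)⁻¹ - (b ^ n)⁻¹ ≤ n * (ε ^ (n + 1))⁻¹ * (b - a) := by
  have ha0 : 0 < a := hε.trans_le ha
  have hb0 : 0 < b := ha0.trans_le hab
  have hbernoulli : 1 + n * (a / b - 1) ≤ (a / b) ^ n :=
    one_add_mul_sub_le_pow (by linarith [div_pos ha0 hb0]) n
  calc (a ^ n)⁻¹ - (b ^ n)⁻¹ = (a ^ n)⁻¹ * (1 - (a / b) ^ n) := by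
        rw [div_pow]
        field_simp
    _ ≤ (a ^ n)⁻¹ * (n * (1 - a / b)) := by
      gcongr
      linarith
    _ = n * ((a ^ n)⁻¹ * b⁻¹) * (b - a) := by field_simp
    _ ≤ n * ((ε ^ n)⁻¹ * ε⁻¹) * (b - a) := by
      have := sub_nonneg.2 hab
      gcongr
      exact ha.trans hab
    _ = n * (ε ^ (n + 1))⁻¹ * (b - a) := by rw [pow_succ, mul_inv]

lemma lichnerowiczTerm_sub_le {ε M a b v w : ℝ} (hε : 0 < ε) (ha : a ∈ Icc 0 M) (hb : b ∈ Icc 0 M)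
    (hv : ε ≤ v) (hvw : v ≤ w) :
    lichnerowiczTerm a b v - lichnerowiczTerm a b w ≤
      M / 4 * (7 * (ε ^ 8)⁻¹ + 3 * (ε ^ 4)⁻¹) * (w - v) := by
  have h7 := inv_pow_sub_inv_pow_le hε hv hvw 7
  have h3 := inv_pow_sub_inv_pow_le hε hv hvw 3
  push_cast at h7 h3
  have : 0 ≤ w - v := sub_nonneg.2 hvw
  calc lichnerowiczTerm a b v - lichnerowiczTerm a b w
      = a / 4 * ((v ^ 7)⁻¹ - (w ^ 7)⁻¹) + b / 4 * ((v ^ 3)⁻¹ - (w ^ 3)⁻¹) := by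
        unfold lichnerowiczTerm
        ring
    _ ≤ a / 4 * (7 * (ε ^ 8)⁻¹ * (w - v)) + b / 4 * (3 * (ε ^ 4)⁻¹ * (w - v)) := by
      gcongr
      exacts [div_nonneg ha.1 zero_le_four, div_nonneg hb.1 zero_le_four]
    _ ≤ M / 4 * (7 * (ε ^ 8)⁻¹ * (w - v)) + M / 4 * (3 * (ε ^ 4)⁻¹ * (w - v)) := by
      gcongr
      exacts [ha.2, hb.2]
    _ = M / 4 * (7 * (ε ^ 8)⁻¹ + 3 * (ε ^ 4)⁻¹) * (w - v) := by ring

section Barrier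

lemma angularLaplacian_exp_inner (k : ℝ) {n p : E3} (hn : n ∈ 𝕊²) (hp : p ∈ 𝕊²) :
    angularLaplacian (fun y ↦ exp (k * (⟪n, y⟫ - 1))) p =
      (k ^ 2 * (1 - ⟪n, p⟫ ^ 2) - 2 * k * ⟪n, p⟫) * exp (k * (⟪n, p⟫ - 1)) := by
  have hexp (z : ℝ) : HasDerivAt (fun z ↦ exp (k * (z - 1))) (k * exp (k * (z - 1))) z := by
    simpa [mul_comm] using (((hasDerivAt_id z).sub_const 1).const_mul k).exp
  rw [angularLaplacian_zonal n p hexp ((hexp _).const_mul k), mem_sphere_zero_iff_norm.1 hn,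
    mem_sphere_zero_iff_norm.1 hp]
  ring

lemma mul_exp_inner_sub_angularLaplacian_le {c k : ℝ} (hk : 0 ≤ k) {n p : E3} (hn : n ∈ 𝕊²)
    (hp : p ∈ 𝕊²) :
    c * exp (k * (⟪n, p⟫ - 1)) - angularLaplacian (fun y ↦ exp (k * (⟪n, y⟫ - 1))) p ≤
      (c + 2 * k) * exp (k * (⟪n, p⟫ - 1)) := by
  obtain ⟨hz₁, hz₂⟩ := inner_mem_Icc_of_mem_sphere hn hp
  rw [angularLaplacian_exp_inner k hn hp, ← sub_mul]
  gcongr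
  nlinarith [mul_nonneg (sq_nonneg k) (mul_nonneg (sub_nonneg.2 hz₂) (neg_le_iff_add_nonneg.1 hz₁)),
    mul_le_mul_of_nonneg_left hz₂ hk]

lemma mul_exp_inner_le_angularLaplacian {c k η : ℝ} (hk : 0 ≤ k) (hck : c ≤ 2 * k)
    (hkη : 3 ≤ k * η) {n p : E3} (hn : n ∈ 𝕊²) (hp : p ∈ 𝕊²) (hnp : ⟪n, p⟫ ≤ 1 - η) :
    c * exp (k * (⟪n, p⟫ - 1)) ≤ angularLaplacian (fun y ↦ exp (k * (⟪n, y⟫ - 1))) p := by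
  have hz : -1 ≤ ⟪n, p⟫ := (inner_mem_Icc_of_mem_sphere hn hp).1
  have hfar : 3 ≤ k * (1 - ⟪n, p⟫) := hkη.trans (by gcongr; linarith)
  rw [angularLaplacian_exp_inner k hn hp]
  gcongr
  calc c ≤ 2 * k := hck
    _ ≤ k * (3 + ⟪n, p⟫) := by nlinarith
    _ = k * (3 * (1 + ⟪n, p⟫) - 2 * ⟪n, p⟫) := by ring
    _ ≤ k * (k * (1 - ⟪n, p⟫) * (1 + ⟪n, p⟫) - 2 * ⟪n, p⟫) := by
      gcongr
      linarith
    _ = k ^ 2 * (1 - ⟪n, p⟫ ^ 2) - 2 * k * ⟪n, p⟫ := by ring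

lemma exists_lt_of_inner_gt {g : E3 → ℝ} (hg : ContinuousOn g 𝕊²) {n : E3} (hn : n ∈ 𝕊²) {m : ℝ}
    (hm : m < g n) : ∃ η > 0, ∀ p ∈ 𝕊², 1 - η < ⟪n, p⟫ → m < g p := by
  obtain ⟨r, hr, hball⟩ := Metric.mem_nhdsWithin_iff.1 ((hg n hn).eventually_const_lt hm)
  refine ⟨r ^ 2 / 2, by positivity, fun p hp hnp ↦ hball ⟨?_, hp⟩⟩
  rw [mem_ball_iff_norm']
  refine lt_of_pow_lt_pow_left₀ 2 hr.le ?_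
  rw [norm_sub_sq_real, mem_sphere_zero_iff_norm.1 hn, mem_sphere_zero_iff_norm.1 hp]
  linarith

/-- The zonal function `exp (k (⟪n, ·⟫ - 1))` satisfies `Δ̃φ ≥ cφ` outside the cap
`⟪n, ·⟫ > 1 - η` once `2 k ≥ c` and `k η ≥ 3`, and inside the cap a small multiple of it has
`cφ - Δ̃φ` below the positive lower bound of `g`. -/
lemma exists_barrier {c : ℝ} (hc : 0 ≤ c) {g : E3 → ℝ} (hg : ContinuousOn g 𝕊²)
    (hg0 : ∀ p ∈ 𝕊², 0 ≤ g p) {n : E3} (hn : n ∈ 𝕊²) (hgn : 0 < g n) :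
    ∃ φ : E3 → ℝ, ContDiff ℝ 2 φ ∧ ∃ ε, 0 < ε ∧
      ∀ p ∈ 𝕊², φ p ∈ Icc ε 1 ∧ c * φ p - angularLaplacian φ p ≤ g p := by
  obtain ⟨η, hη, hcap⟩ := exists_lt_of_inner_gt hg hn (half_lt_self hgn)
  let k := 3 / η + c
  have hk : 0 < k := by positivity
  have hkη : 3 ≤ k * η := by
    rw [add_mul, div_mul_cancel₀ _ hη.ne']
    linarith [mul_nonneg hc hη.le]
  have hck : c ≤ 2 * k := by linarith [div_pos three_pos hη]
  let ψ (y : E3) : ℝ := exp (k * (⟪n, y⟫ - 1))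
  let δ := min 1 (g n / 2 / (c + 2 * k))
  have hδ : 0 < δ := by positivity
  have hψ_smooth : ContDiff ℝ 2 ψ :=
    (contDiff_const.mul ((innerSL ℝ n).contDiff.sub contDiff_const)).exp
  refine ⟨δ • ψ, contDiff_const.smul hψ_smooth, δ * exp (-(2 * k)), by positivity, fun p hp ↦ ?_⟩
  obtain ⟨hz₁, hz₂⟩ := inner_mem_Icc_of_mem_sphere hn hp
  have hψ_lower : exp (-(2 * k)) ≤ ψ p := exp_le_exp.2 (by nlinarith)
  have hψ_upper : ψ p ≤ 1 := exp_le_one_iff.2 (by nlinarith)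
  refine ⟨⟨mul_le_mul_of_nonneg_left hψ_lower hδ.le,
    mul_le_one₀ (min_le_left _ _) (exp_pos _).le hψ_upper⟩, ?_⟩
  rw [angularLaplacian_const_smul, Pi.smul_apply, Pi.smul_apply, smul_eq_mul, smul_eq_mul,
    mul_left_comm, ← mul_sub]
  rcases le_or_gt ⟪n, p⟫ (1 - η) with hfar | hnear
  · have hsub := mul_exp_inner_le_angularLaplacian hk.le hck hkη hn hp hfar
    exact (mul_nonpos_of_nonneg_of_nonpos hδ.le (sub_nonpos.2 hsub)).trans (hg0 p hp)
  · calc δ * (c * ψ p - angularLaplacian ψ p) ≤ δ * ((c + 2 * k) * ψ p) := by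
          gcongr
          exact mul_exp_inner_sub_angularLaplacian_le hk.le hn hp
      _ ≤ g n / 2 / (c + 2 * k) * ((c + 2 * k) * 1) := by
          gcongr
          exact min_le_right _ _
      _ = g n / 2 := by field_simp
      _ ≤ g p := (hcap p hp hnear).le

end Barrier

section Existence

variable {f s V : E3 → ℝ}

lemma exists_nnreal_forall_le (hf : ContinuousOn f 𝕊²) : ∃ M : ℝ≥0, ∀ p ∈ 𝕊², f p ≤ M := by
  obtain ⟨M, hM⟩ := (isCompact_sphere (0 : E3) 1).exists_bound_of_continuousOn hf
  exact ⟨M.toNNReal, fun p hp ↦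
    (le_abs_self _).trans ((hM p hp).trans (Real.le_coe_toNNReal M))⟩

lemma lipschitzWith_mul_add_lichnerowiczTerm {ε M a b : ℝ} {κ : ℝ≥0} (hε : 0 < ε)
    (ha : a ∈ Icc 0 M) (hb : b ∈ Icc 0 M)
    (hκ : (κ : ℝ) = M / 4 * (7 * (ε ^ 8)⁻¹ + 3 * (ε ^ 4)⁻¹)) :
    LipschitzWith κ fun v ↦ κ * v + lichnerowiczTerm a b (max v ε) := by
  have hmax {v w : ℝ} (hvw : v ≤ w) : max w ε - max v ε ≤ w - v :=
    (le_abs_self _).trans ((abs_max_sub_max_le_abs w v ε).trans_eq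
      (abs_of_nonneg (sub_nonneg.2 hvw)))
  refine lipschitzWith_mul_add_of_antitone (fun v w hvw ↦ ?_) fun v w hvw ↦ ?_
  · exact lichnerowiczTerm_anti ha.1 hb.1 (hε.trans_le (le_max_right v ε))
      (max_le_max_right ε hvw)
  · calc lichnerowiczTerm a b (max v ε) - lichnerowiczTerm a b (max w ε)
        ≤ κ * (max w ε - max v ε) := hκ ▸ lichnerowiczTerm_sub_le hε ha hb (le_max_right v ε)
          (max_le_max_right ε hvw)
      _ ≤ κ * (w - v) := mul_le_mul_of_nonneg_left (hmax hvw) κ.coe_nonneg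

lemma exists_truncated_solution {ε : ℝ} (hε : 0 < ε) (hf : ContinuousOn f 𝕊²)
    (hs : ContinuousOn s 𝕊²) (hf0 : ∀ p ∈ 𝕊², 0 ≤ f p) (hs0 : ∀ p ∈ 𝕊², 0 ≤ s p) :
    ∃ V, HasSphericalLaplacian V fun p ↦
      V p / 4 - lichnerowiczTerm (f p) (s p) (max (V p) ε) := by
  obtain ⟨M, hM⟩ := exists_nnreal_forall_le (hf.add hs)
  let κ : ℝ≥0 := ⟨M / 4 * (7 * (ε ^ 8)⁻¹ + 3 * (ε ^ 4)⁻¹), by positivity⟩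
  obtain ⟨V, hV⟩ := exists_hasSphericalLaplacian_of_lipschitzWith
    (κ := κ) (c := κ + 1 / 4) (F := fun p v ↦ κ * v + lichnerowiczTerm (f p) (s p) (max v ε))
    (by linarith)
    (fun p hp ↦ lipschitzWith_mul_add_lichnerowiczTerm hε
      ⟨hf0 p hp, (le_add_of_nonneg_right (hs0 p hp)).trans (hM p hp)⟩
      ⟨hs0 p hp, (le_add_of_nonneg_left (hf0 p hp)).trans (hM p hp)⟩ rfl)
    (fun v ↦ continuousOn_const.add ((hf.div_const _).add (hs.div_const _)))
  exact ⟨V, hV.congr (fun _ _ ↦ rfl) fun p _ ↦ by ring⟩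

lemma exists_lichnerowicz_solution (hf : ContinuousOn f 𝕊²)
    (hs : ContinuousOn s 𝕊²) (hf0 : ∀ p ∈ 𝕊², 0 ≤ f p) (hs0 : ∀ p ∈ 𝕊², 0 ≤ s p)
    (hpos : ∃ p ∈ 𝕊², 0 < f p + s p) :
    ∃ V ε M, 0 < ε ∧ 0 < M ∧ (∀ p ∈ 𝕊², V p ∈ Icc ε M) ∧
      HasSphericalLaplacian V fun p ↦ V p / 4 - lichnerowiczTerm (f p) (s p) (V p) := by
  obtain ⟨n, hn, hn_pos⟩ := hpos
  obtain ⟨φ, hφ, ε, hε, hbarrier⟩ := exists_barrier (c := 1 / 4) (by norm_num)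
    ((hf.add hs).div_const 4)
    (fun p hp ↦ div_nonneg (add_nonneg (hf0 p hp) (hs0 p hp)) zero_le_four)
    hn (div_pos hn_pos four_pos)
  obtain ⟨M, hM⟩ := exists_nnreal_forall_le (hf.add hs)
  obtain ⟨V, hV⟩ := exists_truncated_solution hε hf hs hf0 hs0
  have hlower (p : E3) (hp : p ∈ 𝕊²) : ε ≤ V p := by
    refine (hbarrier p hp).1.1.trans (hV.le_comparison (fun q _ ↦ hφ.contDiffAt) ?_ hp)
    intro q hq hVφ
    obtain ⟨⟨hεφ, hφ_le_one⟩, hLφ : 1 / 4 * φ q - angularLaplacian φ q ≤ (f q + s q) / 4⟩ :=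
      hbarrier q hq
    have hterm := lichnerowiczTerm_anti (hf0 q hq) (hs0 q hq) (hε.trans_le (le_max_right (V q) ε))
      (max_le (hVφ.le.trans hφ_le_one) (hεφ.trans hφ_le_one))
    rw [lichnerowiczTerm_one] at hterm
    linarith
  have hupper (p : E3) (hp : p ∈ 𝕊²) : V p ≤ M + 1 := by
    refine hV.comparison_le (φ := fun _ ↦ (M : ℝ) + 1) (fun q _ ↦ contDiffAt_const) ?_ hp
    intro q hq hVM
    have hterm := lichnerowiczTerm_anti (hf0 q hq) (hs0 q hq) one_pos
      ((le_add_of_nonneg_left M.coe_nonneg).trans (hVM.le.trans (le_max_left (V q) ε)))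
    rw [lichnerowiczTerm_one] at hterm
    have hMq : f q + s q ≤ M := hM q hq
    rw [angularLaplacian_const, Pi.zero_apply]
    linarith
  exact ⟨V, ε, M + 1, hε, by positivity, fun p hp ↦ ⟨hlower p hp, hupper p hp⟩,
    hV.congr (fun _ _ ↦ rfl) fun p hp ↦ by simp only [max_eq_left (hlower p hp)]⟩

lemma contDiffOnSphere_div_four_sub_lichnerowiczTerm {n : WithTop ℕ∞} (hf : ContDiffOnSphere n f)
    (hs : ContDiffOnSphere n s) (hV : ContDiffOnSphere n V) (hV0 : ∀ p ∈ 𝕊², 0 < V p) :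
    ContDiffOnSphere n fun p ↦ V p / 4 - lichnerowiczTerm (f p) (s p) (V p) := by
  have hV_ne (k : ℕ) (y : E3) (hy : y ≠ 0) : 4 * radialExtension V y ^ k ≠ 0 :=
    mul_ne_zero four_ne_zero (pow_ne_zero k (hV0 _ (normalize_mem_sphere hy)).ne')
  exact (ContDiffOn.div_const hV 4).sub
    ((ContDiffOn.div hf (contDiffOn_const.mul (ContDiffOn.pow hV 7)) (hV_ne 7)).add
      (ContDiffOn.div hs (contDiffOn_const.mul (ContDiffOn.pow hV 3)) (hV_ne 3)))

lemma contDiffOnSphere_of_lichnerowicz (k : ℕ) (hf : ContDiffOnSphere k f)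
    (hs : ContDiffOnSphere k s) (hV0 : ∀ p ∈ 𝕊², 0 < V p)
    (hV : HasSphericalLaplacian V fun p ↦ V p / 4 - lichnerowiczTerm (f p) (s p) (V p)) :
    ContDiffOnSphere k V := by
  induction k with
  | zero => exact contDiffOn_zero.2 (continuousOn_radialExtension hV.continuousOn)
  | succ k ih =>
    have hf' : ContDiffOnSphere k f := ContDiffOn.of_le hf (by simp)
    have hs' : ContDiffOnSphere k s := ContDiffOn.of_le hs (by simp)
    exact hV.contDiffOnSphere_succ k
      (contDiffOnSphere_div_four_sub_lichnerowiczTerm hf' hs' (ih hf' hs') hV0)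

lemma smoothOnSphere_of_lichnerowicz (hf : SmoothOnSphere f) (hs : SmoothOnSphere s)
    (hV0 : ∀ p ∈ 𝕊², 0 < V p)
    (hV : HasSphericalLaplacian V fun p ↦ V p / 4 - lichnerowiczTerm (f p) (s p) (V p)) :
    SmoothOnSphere V :=
  contDiffOn_infty.2 fun k ↦ contDiffOnSphere_of_lichnerowicz k
    (contDiffOn_infty.1 hf k) (contDiffOn_infty.1 hs k) hV0 hV

end Existence

theorem angular_equation_existence_uniqueness_general {f s : E3 → ℝ} (hf : SmoothOnSphere f)
    (hs : SmoothOnSphere s) (hf0 : ∀ p ∈ sphere (0 : E3) 1, 0 ≤ f p)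
    (hs0 : ∀ p ∈ sphere (0 : E3) 1, 0 ≤ s p) (hpos : ∃ p ∈ sphere (0 : E3) 1, 0 < f p + s p) :
    ∃ V : E3 → ℝ,
      (SmoothOnSphere V ∧ (∀ p ∈ sphere (0 : E3) 1, 0 < V p) ∧
        (∀ p ∈ sphere (0 : E3) 1,
          sphLap V p - V p / 4 = -f p / (4 * (V p) ^ 7) - s p / (4 * (V p) ^ 3))) ∧
      (∃ cm cp : ℝ, 0 < cm ∧ 0 < cp ∧ ∀ p ∈ sphere (0 : E3) 1, cm ≤ V p ∧ V p ≤ cp) ∧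
      ∀ W : E3 → ℝ,
        (SmoothOnSphere W ∧ (∀ p ∈ sphere (0 : E3) 1, 0 < W p) ∧
          (∀ p ∈ sphere (0 : E3) 1,
            sphLap W p - W p / 4 = -f p / (4 * (W p) ^ 7) - s p / (4 * (W p) ^ 3))) →
        EqOn W V (sphere (0 : E3) 1) := by
  have heq (U : E3 → ℝ) (p : E3) :
      sphLap U p - U p / 4 = -f p / (4 * (U p) ^ 7) - s p / (4 * (U p) ^ 3) ↔
        sphLap U p = U p / 4 - lichnerowiczTerm (f p) (s p) (U p) := by
    rw [sub_eq_iff_eq_add', lichnerowiczTerm, neg_div, ← neg_add', ← sub_eq_add_neg]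
  have hle : (2 : WithTop ℕ∞) ≤ (⊤ : ℕ∞) := WithTop.coe_le_coe.2 le_top
  obtain ⟨V, ε, M, hε, hM, hVmem, hV⟩ := exists_lichnerowicz_solution
    (ContDiffOnSphere.continuousOn hf) (ContDiffOnSphere.continuousOn hs) hf0 hs0 hpos
  have hV0 (p : E3) (hp : p ∈ 𝕊²) : 0 < V p := hε.trans_le (hVmem p hp).1
  have hV_smooth := smoothOnSphere_of_lichnerowicz hf hs hV0 hV
  have hV2 : ContDiffOnSphere 2 V := ContDiffOn.of_le hV_smooth hle
  refine ⟨V, ⟨hV_smooth, hV0, fun p hp ↦ (heq V p).2 ?_⟩, ⟨ε, M, hε, hM, hVmem⟩,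
    fun W ⟨hW_smooth, hW0, hW⟩ ↦ ?_⟩
  · rw [sphLap_eq_angularLaplacian hV2 hp, hV.angularLaplacian_radialExtension hV2 hp]
  · exact HasSphericalLaplacian.eqOn_of_sphLap_eq
      (fun p hp ↦ strictMonoOn_div_four_sub_lichnerowiczTerm (hf0 p hp) (hs0 p hp)) hV hV0
      (ContDiffOn.of_le hW_smooth hle) hW0 fun p hp ↦ (heq W p).1 (hW p hp)

/-- Lemma 4.1: there exists a unique positive `C^∞` solution `V` on `S²`
of `Δ̃V - V/4 = -(3A² + 9J²sin²θ)/(4V⁷) - σ₀/(4V³)`, and it is bounded below and above by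
positive constants. -/
theorem angular_equation_existence_uniqueness
    (A J : ℝ) (hA : 0 ≤ A) (hAJ : 0 < A ∨ J ≠ 0)
    (σ₀ : E3 → ℝ) (hsmooth : SmoothOnSphere σ₀)
    (hnonneg : ∀ p ∈ sphere (0:E3) 1, 0 ≤ σ₀ p)
    (hbdd : ∃ C, ∀ p ∈ sphere (0:E3) 1, σ₀ p ≤ C) :
    ∃ V : E3 → ℝ,
      (SmoothOnSphere V ∧ (∀ p ∈ sphere (0:E3) 1, 0 < V p) ∧
        (∀ p ∈ sphere (0:E3) 1,
          sphLap V p - V p / 4 =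
            -(3*A^2 + 9*J^2 * sin2θ p) / (4 * (V p)^7) - σ₀ p / (4 * (V p)^3))) ∧
      (∃ cm cp : ℝ, 0 < cm ∧ 0 < cp ∧
        ∀ p ∈ sphere (0:E3) 1, cm ≤ V p ∧ V p ≤ cp) ∧
      ∀ W : E3 → ℝ,
        (SmoothOnSphere W ∧ (∀ p ∈ sphere (0:E3) 1, 0 < W p) ∧
          (∀ p ∈ sphere (0:E3) 1,
            sphLap W p - W p / 4 =
              -(3*A^2 + 9*J^2 * sin2θ p) / (4 * (W p)^7) - σ₀ p / (4 * (W p)^3))) →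
        Set.EqOn W V (sphere (0:E3) 1) := by
  have hf : SmoothOnSphere fun p ↦ 3 * A ^ 2 + 9 * J ^ 2 * sin2θ p :=
    contDiffOnSphere_of_contDiff (n := (⊤ : ℕ∞)) (f := fun p ↦ 3 * A ^ 2 + 9 * J ^ 2 * sin2θ p)
      (by unfold sin2θ; fun_prop)
  have hpos : 0 < 3 * A ^ 2 + 9 * J ^ 2 := by
    rcases hAJ with hA | hJ <;> positivity
  have hequator : EuclideanSpace.single 0 1 ∈ sphere (0 : E3) 1 := by simp
  exact angular_equation_existence_uniqueness_general hf hsmooth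
    (fun p _ ↦ by unfold sin2θ; positivity) hnonneg
    ⟨_, hequator, add_pos_of_pos_of_nonneg (by simpa [sin2θ] using hpos) (hnonneg _ hequator)⟩
end
end

section
/- Assume A > 0 or J ≠ 0, and set c₊ = (2 sup_{S²} σ₀ + √(6A² + 18J²))^{1/4}. Then the constant function c₊ is a supersolution: for every (θ,φ) ∈ S², −c₊/4 ≤ −(3A² + 9J² sin²θ)/(4c₊⁷) − σ₀(θ,φ)/(4c₊³). -/
open MeasureTheory Real Filter Metric Set
open scoped ENNReal RealInnerProductSpace NNReal

noncomputable section

/-!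
Write `c₊⁴ = 2S + Q` with `S = sup σ₀` and `Q² = 6A² + 18J²`. Multiplied by `4c₊⁷`, the
supersolution inequality becomes `3A² + 9J² sin²θ + σ₀ c₊⁴ ≤ c₊⁸`, which is quadratic in `c₊⁴`.
It holds because the left-hand side is at most `Q² + S c₊⁴`, while
`c₊⁸ - S c₊⁴ = (2S + Q)(S + Q) ≥ Q²`.
-/

lemma neg_div_four_le_neg_div_sub_div_iff {K : Type*} [Field K] [LinearOrder K]
    [IsStrictOrderedRing K] {c N s : K} (hc : 0 < c) :
    -c / 4 ≤ -N / (4 * c ^ 7) - s / (4 * c ^ 3) ↔ N + s * c ^ 4 ≤ c ^ 8 := by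
  have h_diff : -N / (4 * c ^ 7) - s / (4 * c ^ 3) - -c / 4 =
      (c ^ 8 - (N + s * c ^ 4)) / (4 * c ^ 7) := by
    field_simp
    ring
  rw [← sub_nonneg, h_diff, le_div_iff₀ (by positivity), zero_mul, sub_nonneg]

lemma add_mul_two_mul_add_le_sq {R : Type*} [CommRing R] [LinearOrder R] [IsStrictOrderedRing R]
    {N Q S s : R} (hS : 0 ≤ S) (hQ : 0 ≤ Q) (hN : N ≤ Q ^ 2) (hs : s ≤ S) :
    N + s * (2 * S + Q) ≤ (2 * S + Q) ^ 2 :=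
  calc
    N + s * (2 * S + Q) ≤ Q ^ 2 + S * (2 * S + Q) := by gcongr
    _ ≤ Q ^ 2 + S * (2 * S + Q) + (2 * S ^ 2 + 3 * S * Q) := le_add_of_nonneg_right (by positivity)
    _ = (2 * S + Q) ^ 2 := by ring

/-- The constant `c₊` of the paper, as a function of an upper bound `S` of `σ₀` and of the
curvature scale `Q = √(6A² + 18J²)`. -/
def supersolutionConst (S Q : ℝ) : ℝ := (2 * S + Q) ^ ((1 : ℝ) / 4)

lemma supersolutionConst_pos {S Q : ℝ} (h : 0 < 2 * S + Q) : 0 < supersolutionConst S Q :=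
  rpow_pos_of_pos h _

lemma supersolutionConst_pow_four {S Q : ℝ} (h : 0 ≤ 2 * S + Q) :
    supersolutionConst S Q ^ 4 = 2 * S + Q := by
  simpa [supersolutionConst] using rpow_inv_natCast_pow h four_ne_zero

lemma neg_supersolutionConst_div_four_le {N Q S s : ℝ} (hS : 0 ≤ S) (hQ : 0 ≤ Q)
    (hpos : 0 < 2 * S + Q) (hN : N ≤ Q ^ 2) (hs : s ≤ S) :
    -supersolutionConst S Q / 4 ≤
      -N / (4 * supersolutionConst S Q ^ 7) - s / (4 * supersolutionConst S Q ^ 3) := by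
  rw [neg_div_four_le_neg_div_sub_div_iff (supersolutionConst_pos hpos),
    pow_mul (supersolutionConst S Q) 4 2, supersolutionConst_pow_four hpos.le]
  exact add_mul_two_mul_add_le_sq hS hQ hN hs

lemma sqrt_six_mul_sq_add_pos {A J : ℝ} (h : A ≠ 0 ∨ J ≠ 0) : 0 < √(6 * A ^ 2 + 18 * J ^ 2) := by
  rw [sqrt_pos]
  rcases h with hA | hJ <;> positivity

lemma sin2θ_le_norm_sq (p : E3) : sin2θ p ≤ ‖p‖ ^ 2 := by
  rw [EuclideanSpace.real_norm_sq_eq, Fin.sum_univ_three]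
  exact le_add_of_nonneg_right (sq_nonneg (p 2))

lemma sin2θ_le_one {p : E3} (hp : p ∈ sphere (0 : E3) 1) : sin2θ p ≤ 1 := by
  simpa [mem_sphere_zero_iff_norm.mp hp] using sin2θ_le_norm_sq p

theorem constant_supersolution_general {α : Type*} {X : Set α} {σ₀ w : α → ℝ} {A J : ℝ}
    (hbdd : BddAbove (σ₀ '' X)) (hsup : 0 ≤ sSup (σ₀ '' X))
    (hpos : 0 < 2 * sSup (σ₀ '' X) + √(6 * A ^ 2 + 18 * J ^ 2)) (hw : ∀ p ∈ X, w p ≤ 1) :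
    ∀ p ∈ X,
      -supersolutionConst (sSup (σ₀ '' X)) √(6 * A ^ 2 + 18 * J ^ 2) / 4 ≤
        -(3 * A ^ 2 + 9 * J ^ 2 * w p) /
            (4 * supersolutionConst (sSup (σ₀ '' X)) √(6 * A ^ 2 + 18 * J ^ 2) ^ 7)
          - σ₀ p / (4 * supersolutionConst (sSup (σ₀ '' X)) √(6 * A ^ 2 + 18 * J ^ 2) ^ 3) := by
  intro p hp
  have h_curvature : 3 * A ^ 2 + 9 * J ^ 2 * w p ≤ √(6 * A ^ 2 + 18 * J ^ 2) ^ 2 :=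
    calc
      3 * A ^ 2 + 9 * J ^ 2 * w p ≤ 3 * A ^ 2 + 9 * J ^ 2 * 1 := by gcongr; exact hw p hp
      _ ≤ 6 * A ^ 2 + 18 * J ^ 2 := by linarith [sq_nonneg A, sq_nonneg J]
      _ = √(6 * A ^ 2 + 18 * J ^ 2) ^ 2 := (sq_sqrt (by positivity)).symm
  exact neg_supersolutionConst_div_four_le hsup (sqrt_nonneg _) hpos h_curvature
    (le_csSup hbdd (mem_image_of_mem σ₀ hp))

/-- the constant `c₊ = (2 sup σ₀ + √(6A² + 18J²))^{1/4}` is a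
supersolution: `-c₊/4 ≤ -(3A² + 9J²sin²θ)/(4c₊⁷) - σ₀/(4c₊³)` on `S²`. -/
theorem constant_supersolution
    (A J : ℝ) (hA : 0 ≤ A) (hAJ : 0 < A ∨ J ≠ 0)
    (σ₀ : E3 → ℝ) (hsmooth : SmoothOnSphere σ₀)
    (hnonneg : ∀ p ∈ sphere (0:E3) 1, 0 ≤ σ₀ p)
    (hbdd : ∃ C, ∀ p ∈ sphere (0:E3) 1, σ₀ p ≤ C) :
    ∀ p ∈ sphere (0:E3) 1,
      -(2 * sSup (σ₀ '' sphere (0:E3) 1) + Real.sqrt (6*A^2 + 18*J^2)) ^ ((1:ℝ)/4) / 4 ≤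
        -(3*A^2 + 9*J^2 * sin2θ p) /
            (4 * ((2 * sSup (σ₀ '' sphere (0:E3) 1) + Real.sqrt (6*A^2 + 18*J^2)) ^ ((1:ℝ)/4))^7)
          - σ₀ p /
            (4 * ((2 * sSup (σ₀ '' sphere (0:E3) 1) + Real.sqrt (6*A^2 + 18*J^2)) ^ ((1:ℝ)/4))^3) := by
  have hsup : 0 ≤ sSup (σ₀ '' sphere (0 : E3) 1) := Real.sSup_nonneg (forall_mem_image.mpr hnonneg)
  have hsqrt := sqrt_six_mul_sq_add_pos (hAJ.imp_left ne_of_gt)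
  exact constant_supersolution_general (hbdd.imp fun _ => forall_mem_image.mpr) hsup
    (by positivity) fun _ => sin2θ_le_one
end
end
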